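/- Let x ≥ 4 be a natural number. Suppose that every noncomplete 3-connected 4-chromatic finite simple graph H satisfies π(H,x) < (x)↓4·(x−1)^(|V(H)|−4). Then every connected 4-chromatic finite simple graph G of order n satisfies π(G,x) ≤ (x)↓4·(x−1)^(n−4), with equality if and only if G has clique number 4 and exactly n+2 edges. -/

import Mathlib

/-!
All counting is done with maps `f : V → Fin x` that are proper on a subset `Q` of the vertices and
arbitrary elsewhere, so that graphs of different orders are compared inside one sample space and a
vertex can be recolored independently (`resample`). In this normalization, adding a vertex next to
an earlier one multiplies the count by at most `(x - 1) / x`, and `bound x m` is the proportion of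
maps corresponding to `(x)↓4 (x-1)^(m-4)`.

If `G` contains a 4-clique, `G` is grown from it vertex by vertex. This gives the bound. It is
attained exactly if every step adds a single edge, that is, if there are `6 + (n - 4) = n + 2`
edges: a new vertex with two earlier neighbors `s₁`, `s₂` loses colorings because `s₁`, `s₂` are
sometimes differently colored (`build_darts`, `pair_bound`). A 4-chromatic graph has no 5-clique.

If there is no 4-clique, the bound is shown to be strict by induction on the number of vertices
(`induction_bound`). A vertex set that is not 3-colorable and minimal as such is connected, and the
rest of the graph is grown from it, so the graph may be assumed to be critical: deleting any vertex
makes it 3-colorable. If it is 3-connected, the hypothesis applies. Otherwise there is a cut of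
size at most two; as 3-colorings of the two sides cannot be glued, it consists of nonadjacent
vertices `u`, `v`, equally colored in all 3-colorings of one side `A` and differently colored in all
3-colorings of the other side `B` (`cut_dichotomy`). Hence `A` plus the edge `uv`, and `B` with `u`
and `v` identified, are smaller connected 4-chromatic graphs, to which the induction hypothesis
applies. A coloring with `f u = f v` is a coloring of the latter extended to `A`. A coloring with
`f u ≠ f v` is a coloring of the former extended to `B`, where a vertex of `B` outside the cut has
three neighbors by criticality; these carry more than two colors on average (`triple_bound`), so
the vertex has fewer than `x - 2` choices on average. Relative to the bound the two cases
contribute less than `(x - 2) / (x - 1)` and at most `1 / (x - 1)`, so the sum is strictly below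
the bound (`Cut.count_lt`).
-/

open SimpleGraph Finset

/-- `chromPoly G x` is the number of proper `x`-colorings of the graph `G`,
i.e. the value `π(G,x)` of the chromatic polynomial at `x`. -/
noncomputable def chromPoly {V : Type} (G : SimpleGraph V) (x : ℕ) : ℕ :=
  Nat.card {f : V → Fin x // ∀ ⦃u v : V⦄, G.Adj u v → f u ≠ f v}

namespace Tomescu

section

open scoped Classical

variable {V : Type}

/-! ### Weighted sums over colorings -/

/-- `f` is a proper coloring of the subgraph of `G` induced on `Q`; the values of `f` outside
`Q` are unconstrained. -/
def Proper {K : Type} (G : SimpleGraph V) (Q : Finset V) (f : V → K) : Prop :=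
  ∀ a ∈ Q, ∀ b ∈ Q, G.Adj a b → f a ≠ f b

/-- Indicator function of the maps that are proper on `Q`. -/
noncomputable def ind {x : ℕ} (G : SimpleGraph V) (Q : Finset V) (f : V → Fin x) : ℝ :=
  if Proper G Q f then 1 else 0

/-- `ψ` ignores the color of the vertex `y`. -/
def Indep {x : ℕ} (ψ : (V → Fin x) → ℝ) (y : V) : Prop :=
  ∀ f a, ψ (Function.update f y a) = ψ f

/-- `Q` arises from `P` by successively adding vertices adjacent to an earlier vertex. -/
inductive Build (G : SimpleGraph V) (P : Finset V) : Finset V → Prop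
  | base : Build G P P
  | step {Q : Finset V} {y z : V} : Build G P Q → y ∉ Q → z ∈ Q → G.Adj z y →
      Build G P (insert y Q)

lemma Build.subset {G : SimpleGraph V} {P Q : Finset V} (h : Build G P Q) : P ⊆ Q := by
  induction h with
  | base => exact Subset.rfl
  | step _ _ _ _ ih => exact ih.trans (subset_insert _ _)

lemma ind_nonneg {x : ℕ} (G : SimpleGraph V) (Q : Finset V) (f : V → Fin x) :
    0 ≤ ind G Q f := by
  unfold ind; split_ifs <;> norm_num

lemma ind_le_one {x : ℕ} (G : SimpleGraph V) (Q : Finset V) (f : V → Fin x) :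
    ind G Q f ≤ 1 := by
  unfold ind; split_ifs <;> norm_num

section Counting

variable [Fintype V] {x : ℕ}

/-- Recoloring one vertex uniformly at random preserves the average of a function. -/
lemma resample (y : V) (F : (V → Fin x) → ℝ) :
    (x : ℝ) * ∑ f, F f = ∑ f, ∑ a, F (Function.update f y a) := by
  let e : (V → Fin x) × Fin x → (V → Fin x) × Fin x :=
    fun p => (Function.update p.1 y p.2, p.1 y)
  have he : Function.Involutive e := by
    rintro ⟨f, a⟩
    simp [e]
  have h1 : ∑ p : (V → Fin x) × Fin x, F (e p).1 = ∑ p : (V → Fin x) × Fin x, F p.1 :=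
    Equiv.sum_comp he.toPerm (fun p => F p.1)
  rw [Fintype.sum_prod_type, Fintype.sum_prod_type] at h1
  rw [h1]
  simp [mul_sum]

lemma ind_insert_update (G : SimpleGraph V) {Q : Finset V} {y : V} (hy : y ∉ Q)
    (f : V → Fin x) (a : Fin x) :
    ind G (insert y Q) (Function.update f y a) =
      ind G Q f * if ∀ z ∈ Q, G.Adj z y → f z ≠ a then 1 else 0 := by
  have hup : ∀ z ∈ Q, Function.update f y a z = f z := fun z hz =>
    Function.update_of_ne (ne_of_mem_of_not_mem hz hy) _ _
  have : Proper G (insert y Q) (Function.update f y a) ↔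
      Proper G Q f ∧ ∀ z ∈ Q, G.Adj z y → f z ≠ a := by
    constructor
    · intro h
      refine ⟨fun b hb c hc hbc => ?_, fun z hz hzy => ?_⟩
      · have := h b (mem_insert_of_mem hb) c (mem_insert_of_mem hc) hbc
        rwa [hup b hb, hup c hc] at this
      · have := h z (mem_insert_of_mem hz) y (mem_insert_self _ _) hzy
        rwa [hup z hz, Function.update_self] at this
    · rintro ⟨h1, h2⟩ b hb c hc hbc
      rw [mem_insert] at hb hc
      rcases hb with rfl | hb
      · rcases hc with rfl | hc
        · exact absurd hbc (G.irrefl)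
        · rw [hup c hc, Function.update_self]
          exact (h2 c hc hbc.symm).symm
      · rcases hc with rfl | hc
        · rw [hup b hb, Function.update_self]
          exact h2 b hb hbc
        · rw [hup c hc, hup b hb]
          exact h1 b hb c hc hbc
  unfold ind
  simp only [this, ite_and]
  split_ifs <;> simp

lemma step_exact (G : SimpleGraph V) {Q : Finset V} {y : V} (hy : y ∉ Q)
    (φ : (V → Fin x) → ℝ) :
    (x : ℝ) * ∑ f, ind G (insert y Q) f * φ f =
      ∑ f, ind G Q f * ∑ a with ∀ z ∈ Q, G.Adj z y → f z ≠ a, φ (Function.update f y a) := by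
  rw [resample y]
  refine sum_congr rfl fun f _ => ?_
  rw [sum_filter, mul_sum]
  refine sum_congr rfl fun a _ => ?_
  rw [ind_insert_update G hy]
  split_ifs <;> simp

/-- Adding a vertex `y` with a known set `N` of earlier neighbors: `y` avoids the colors
of `N`. -/
lemma step_le (G : SimpleGraph V) {Q N : Finset V} {y : V} (hy : y ∉ Q) (hN : N ⊆ Q)
    (hadj : ∀ z ∈ N, G.Adj z y) (φ : (V → Fin x) → ℝ) (hφ : ∀ f, 0 ≤ φ f) :
    (x : ℝ) * ∑ f, ind G (insert y Q) f * φ f ≤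
      ∑ f, ind G Q f * ∑ a ∈ univ \ N.image f, φ (Function.update f y a) := by
  rw [step_exact G hy]
  refine sum_le_sum fun f _ => mul_le_mul_of_nonneg_left ?_ (ind_nonneg _ _ _)
  refine sum_le_sum_of_subset_of_nonneg ?_ (fun _ _ _ => hφ _)
  intro a ha
  simp only [mem_filter, mem_univ, true_and, mem_sdiff, mem_image, not_exists, not_and] at ha ⊢
  exact fun z hz => ha z (hN hz) (hadj z hz)

/-- As `step_le`, for a weight that does not see the new vertex. -/
lemma step_le_indep (G : SimpleGraph V) {Q N : Finset V} {y : V} (hy : y ∉ Q) (hN : N ⊆ Q)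
    (hadj : ∀ z ∈ N, G.Adj z y) (ψ : (V → Fin x) → ℝ) (hψ : ∀ f, 0 ≤ ψ f) (hi : Indep ψ y) :
    (x : ℝ) * ∑ f, ind G (insert y Q) f * ψ f ≤
      ∑ f, ind G Q f * (ψ f * ((x : ℝ) - #(N.image f))) := by
  refine (step_le G hy hN hadj ψ hψ).trans (sum_le_sum fun f _ => ?_)
  refine mul_le_mul_of_nonneg_left (le_of_eq ?_) (ind_nonneg _ _ _)
  rw [sum_congr rfl (fun a _ => hi f a), sum_const, card_sdiff_of_subset (subset_univ _),
    nsmul_eq_mul, card_univ, Nat.cast_sub (card_le_univ _)]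
  simp [mul_comm]

/-- Adding vertices one at a time, each next to an earlier one, each new vertex costs a
factor of at most `(x - 1) / x`. -/
lemma build_le (hx : 4 ≤ x) {G : SimpleGraph V} {P Q : Finset V} (h : Build G P Q)
    (ψ : (V → Fin x) → ℝ) (hψ : ∀ f, 0 ≤ ψ f) (hi : ∀ y ∈ Q, y ∉ P → Indep ψ y) :
    ∑ f, ind G Q f * ψ f ≤ (((x : ℝ) - 1) / x) ^ (#Q - #P) * ∑ f, ind G P f * ψ f := by
  have hX : (4 : ℝ) ≤ x := by exact_mod_cast hx
  induction h with
  | base => simp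
  | @step Q y z hb hy hz hzy ih =>
    have hle := card_le_card hb.subset
    have ih := ih (fun w hw => hi w (mem_insert_of_mem hw))
    have h1 := step_le_indep G hy (singleton_subset_iff.2 hz) (by simpa using hzy) ψ hψ
      (hi y (mem_insert_self _ _) (fun h => hy (hb.subset h)))
    simp only [image_singleton, card_singleton, Nat.cast_one, ← mul_assoc, ← sum_mul] at h1
    rw [card_insert_of_notMem hy, Nat.sub_add_comm hle, pow_succ]
    set S := ∑ f, ind G (insert y Q) f * ψ f
    set S' := ∑ f, ind G Q f * ψ f
    have h2 : S ≤ (((x : ℝ) - 1) / x) * S' := by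
      rw [div_mul_eq_mul_div, le_div_iff₀ (by linarith)]; linarith
    refine h2.trans ?_
    rw [mul_comm (_ ^ _), mul_assoc]
    exact mul_le_mul_of_nonneg_left ih (div_nonneg (by linarith) (by linarith))

/-- In a weighted count of the colorings grown from `P`, two distinct vertices get different
colors so much more often than equal ones that a definite proportion is gained. -/
lemma pair_bound (hx : 4 ≤ x) {G : SimpleGraph V} {P Q : Finset V} (h : Build G P Q)
    (ψ : (V → Fin x) → ℝ) (hψ : ∀ f, 0 ≤ ψ f) (hi : ∀ y ∈ Q, y ∉ P → Indep ψ y)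
    (hP : ∀ f, ψ f ≠ 0 → ∀ a ∈ P, ∀ b ∈ P, a ≠ b → f a ≠ f b)
    (M : ℝ) (hM : 1 ≤ M) (s₁ s₂ : V) (hs₁ : s₁ ∈ Q) (hs₂ : s₂ ∈ Q) (hs : s₁ ≠ s₂) :
    ∑ f, ind G Q f * (ψ f * (M + if f s₁ = f s₂ then 1 else -1)) ≤
      (((x : ℝ) - 1) / x) ^ (#Q - #P) * ((M - 1 / 3) * ∑ f, ψ f) := by
  have hX : (4 : ℝ) ≤ x := by exact_mod_cast hx
  have hr : 0 ≤ ((x : ℝ) - 1) / x := div_nonneg (by linarith) (by linarith)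
  induction h generalizing s₁ s₂ with
  | base =>
    simp only [tsub_self, pow_zero, one_mul, mul_sum]
    refine sum_le_sum fun f _ => ?_
    by_cases h0 : ψ f = 0
    · simp [h0]
    · rw [if_neg (hP f h0 s₁ hs₁ s₂ hs₂ hs)]
      have h1 := ind_le_one G P f
      have h2 := ind_nonneg G P f
      have h3 := hψ f
      have h4 : 0 ≤ ψ f * (M + -1) := mul_nonneg h3 (by linarith)
      nlinarith
  | @step Q y z hb hy hz hzy ih =>
    have hle := card_le_card hb.subset
    have hi' : ∀ w ∈ Q, w ∉ P → Indep ψ w := fun w hw => hi w (mem_insert_of_mem hw)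
    have hyψ : Indep ψ y := hi y (mem_insert_self _ _) (fun h => hy (hb.subset h))
    rw [card_insert_of_notMem hy, Nat.sub_add_comm hle, pow_succ]
    have hxx : ∀ S c : ℝ, (x : ℝ) * S ≤ ((x : ℝ) - 1) *
        ((((x : ℝ) - 1) / x) ^ (#Q - #P) * c) →
        S ≤ (((x : ℝ) - 1) / x) ^ (#Q - #P) * (((x : ℝ) - 1) / x) * c := by
      intro S c hS
      have : (((x : ℝ) - 1) / x) ^ (#Q - #P) * (((x : ℝ) - 1) / x) * c =
        (((x : ℝ) - 1) * ((((x : ℝ) - 1) / x) ^ (#Q - #P) * c)) / x := by ring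
      rw [this, le_div_iff₀ (by linarith)]; linarith
    have hwt : ∀ s₁ s₂ f, 0 ≤ ψ f * (M + if f s₁ = f s₂ then 1 else -1) := by
      intro s₁ s₂ f
      refine mul_nonneg (hψ f) ?_
      split_ifs <;> linarith
    -- The case in which the new vertex is one of the pair; no induction is needed here.
    have key : ∀ s ∈ Q,
        ∑ f, ind G (insert y Q) f * (ψ f * (M + if f s = f y then 1 else -1)) ≤
        (((x : ℝ) - 1) / x) ^ (#Q - #P) * (((x : ℝ) - 1) / x) * ((M - 1 / 3) * ∑ f, ψ f) := by
      intro s hs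
      have hsy : s ≠ y := fun h => hy (h ▸ hs)
      apply hxx
      refine (step_le G hy (singleton_subset_iff.2 hz) (by simpa using hzy) _
        (hwt s y)).trans ?_
      have h1 := build_le hx hb ψ hψ hi'
      have h2 : ∑ f, ind G P f * ψ f ≤ ∑ f, ψ f := sum_le_sum fun f _ => by
        have := mul_le_mul_of_nonneg_right (ind_le_one G P f) (hψ f)
        simpa using this
      have h3 : ∑ f, ind G Q f * ψ f ≤ (((x : ℝ) - 1) / x) ^ (#Q - #P) * ∑ f, ψ f :=
        h1.trans (mul_le_mul_of_nonneg_left h2 (pow_nonneg hr _))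
      have h4 : ((x : ℝ) - 1) * (M - 1 / 3) * ∑ f, ind G Q f * ψ f ≤
          ((x : ℝ) - 1) * (M - 1 / 3) * ((((x : ℝ) - 1) / x) ^ (#Q - #P) * ∑ f, ψ f) :=
        mul_le_mul_of_nonneg_left h3 (mul_nonneg (by linarith) (by linarith))
      refine le_trans ?_ (h4.trans (le_of_eq (by ring)))
      rw [mul_sum]
      refine sum_le_sum fun f _ => ?_
      have h5 : ∑ a ∈ univ \ ({z} : Finset V).image f, ψ (Function.update f y a) *
          (M + if Function.update f y a s = Function.update f y a y then 1 else -1) ≤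
          ψ f * (((x : ℝ) - 1) * (M - 1 / 3)) := by
        simp only [hyψ f _, Function.update_of_ne hsy, Function.update_self]
        rw [← mul_sum]
        refine mul_le_mul_of_nonneg_left ?_ (hψ f)
        have e : ∀ a, (M + if f s = a then (1 : ℝ) else -1) =
            (M - 1) + (if f s = a then 2 else 0) := by
          intro a; split_ifs <;> ring
        simp only [e, sum_add_distrib, sum_const, image_singleton,
          card_sdiff_of_subset (subset_univ _), card_univ, Fintype.card_fin, card_singleton,
          nsmul_eq_mul, sum_ite_eq]
        rw [Nat.cast_sub (by omega)]
        have : (if f s ∈ univ \ {f z} then (2 : ℝ) else 0) ≤ 2 := by split_ifs <;> norm_num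
        push_cast
        nlinarith
      have := mul_le_mul_of_nonneg_left h5 (ind_nonneg G Q f)
      linarith
    rw [mem_insert] at hs₁ hs₂
    rcases hs₁ with rfl | hs₁
    · rcases hs₂ with rfl | hs₂
      · exact absurd rfl hs
      · have := key s₂ hs₂
        simpa only [eq_comm] using this
    · rcases hs₂ with rfl | hs₂
      · exact key s₁ hs₁
      · have ih := ih hi' s₁ s₂ hs₁ hs₂ hs
        have h1 : s₁ ≠ y := fun h => hy (h ▸ hs₁)
        have h2 : s₂ ≠ y := fun h => hy (h ▸ hs₂)
        have h3 := step_le_indep G hy (singleton_subset_iff.2 hz) (by simpa using hzy) _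
          (hwt s₁ s₂) (by
            intro f a
            simp only [hyψ f a, Function.update_of_ne h1, Function.update_of_ne h2])
        simp only [image_singleton, card_singleton, Nat.cast_one] at h3
        simp only [← mul_assoc, ← sum_mul] at h3
        simp only [mul_assoc] at h3
        apply hxx
        refine h3.trans ?_
        rw [mul_comm]
        exact mul_le_mul_of_nonneg_left ih (by linarith)

/-- In a weighted count of the colorings grown from at most two vertices, any three distinct
vertices carry, on average, more than two colors: by `pair_bound`, monochromatic triples are
outnumbered by rainbow triples. -/
lemma triple_bound (hx : 4 ≤ x) {G : SimpleGraph V} {P Q : Finset V} (h : Build G P Q)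
    (ψ : (V → Fin x) → ℝ) (hψ : ∀ f, 0 ≤ ψ f) (hi : ∀ y ∈ Q, y ∉ P → Indep ψ y)
    (hP : ∀ f, ψ f ≠ 0 → ∀ a ∈ P, ∀ b ∈ P, a ≠ b → f a ≠ f b) (hP2 : #P ≤ 2)
    (N : Finset V) (hN : N ⊆ Q) (hN3 : #N = 3) :
    ∑ f, ind G Q f * (ψ f * ((x : ℝ) - #(N.image f))) ≤
      (((x : ℝ) - 1) / x) ^ (#Q - #P) *
        (((x : ℝ) - 2 - 1 / (3 * ((x : ℝ) - 1))) * ∑ f, ψ f) := by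
  have hX : (4 : ℝ) ≤ x := by exact_mod_cast hx
  have hr : 0 ≤ ((x : ℝ) - 1) / x := div_nonneg (by linarith) (by linarith)
  induction h with
  | base =>
    have := card_le_card hN
    omega
  | @step Q y z hb hy hz hzy ih =>
    have hle := card_le_card hb.subset
    have hi' : ∀ w ∈ Q, w ∉ P → Indep ψ w := fun w hw => hi w (mem_insert_of_mem hw)
    have hyψ : Indep ψ y := hi y (mem_insert_self _ _) (fun h => hy (hb.subset h))
    rw [card_insert_of_notMem hy, Nat.sub_add_comm hle, pow_succ]
    have hxx : ∀ S c : ℝ, (x : ℝ) * S ≤ ((x : ℝ) - 1) *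
        ((((x : ℝ) - 1) / x) ^ (#Q - #P) * c) →
        S ≤ (((x : ℝ) - 1) / x) ^ (#Q - #P) * (((x : ℝ) - 1) / x) * c := by
      intro S c hS
      have : (((x : ℝ) - 1) / x) ^ (#Q - #P) * (((x : ℝ) - 1) / x) * c =
        (((x : ℝ) - 1) * ((((x : ℝ) - 1) / x) ^ (#Q - #P) * c)) / x := by ring
      rw [this, le_div_iff₀ (by linarith)]; linarith
    have hwt : ∀ f : V → Fin x, 0 ≤ ψ f * ((x : ℝ) - #(N.image f)) := by
      intro f
      refine mul_nonneg (hψ f) ?_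
      have : #(N.image f) ≤ x := (card_le_univ _).trans (by simp)
      have : (#(N.image f) : ℝ) ≤ x := by exact_mod_cast this
      linarith
    apply hxx
    by_cases hyN : y ∈ N
    · obtain ⟨s₁, s₂, hs, hN'⟩ := card_eq_two.1
        (show #(N.erase y) = 2 by rw [card_erase_of_mem hyN, hN3])
      have hN'' : N = {y, s₁, s₂} := by rw [← insert_erase hyN, hN']
      have hs₁N : s₁ ∈ N.erase y := by rw [hN']; simp
      have hs₂N : s₂ ∈ N.erase y := by rw [hN']; simp
      have h1 : s₁ ≠ y := (mem_erase.1 hs₁N).1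
      have h2 : s₂ ≠ y := (mem_erase.1 hs₂N).1
      have hs₁ : s₁ ∈ Q := (mem_insert.1 (hN (mem_erase.1 hs₁N).2)).resolve_left h1
      have hs₂ : s₂ ∈ Q := (mem_insert.1 (hN (mem_erase.1 hs₂N).2)).resolve_left h2
      have hpb := pair_bound hx hb ψ hψ hi' hP (((x : ℝ) - 1) * (x - 2)) (by nlinarith)
        s₁ s₂ hs₁ hs₂ hs
      refine (step_le G hy (singleton_subset_iff.2 hz) (by simpa using hzy) _ hwt).trans ?_
      refine le_trans ?_ (hpb.trans (le_of_eq ?_))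
      · refine sum_le_sum fun f _ => mul_le_mul_of_nonneg_left ?_ (ind_nonneg _ _ _)
        simp only [hyψ f _]
        rw [← mul_sum]
        refine mul_le_mul_of_nonneg_left ?_ (hψ f)
        have him : ∀ a, N.image (Function.update f y a) = {a, f s₁, f s₂} := by
          intro a
          rw [hN'']
          simp [image_insert, Function.update_of_ne h1, Function.update_of_ne h2]
        simp only [him, image_singleton]
        by_cases hpq : f s₁ = f s₂
        · have e : ∀ a, (x : ℝ) - #({a, f s₁, f s₂} : Finset (Fin x)) ≤
              ((x : ℝ) - 2) + (if f s₁ = a then 1 else 0) := by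
            intro a
            rw [← hpq]
            by_cases h : f s₁ = a
            · subst h; simp; linarith
            · simp [card_pair (Ne.symm h), h]
          refine (sum_le_sum fun a _ => e a).trans ?_
          simp only [sum_add_distrib, sum_const,
            card_sdiff_of_subset (subset_univ _), card_univ, Fintype.card_fin, card_singleton,
            nsmul_eq_mul, sum_ite_eq]
          rw [Nat.cast_sub (by omega), if_pos hpq]
          have : (if f s₁ ∈ univ \ {f z} then (1 : ℝ) else 0) ≤ 1 := by split_ifs <;> norm_num
          push_cast
          linarith
        · have e : ∀ a, (x : ℝ) - #({a, f s₁, f s₂} : Finset (Fin x)) ≤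
              ((x : ℝ) - 3) + (if f s₁ = a then 1 else 0) + (if f s₂ = a then 1 else 0) := by
            intro a
            by_cases h : f s₁ = a
            · subst h; simp [card_pair hpq, Ne.symm hpq]; linarith
            · by_cases h' : f s₂ = a
              · subst h'; simp [card_pair (hpq), hpq]; linarith
              · have : #({a, f s₁, f s₂} : Finset (Fin x)) = 3 :=
                  card_eq_three.2 ⟨_, _, _, Ne.symm h, Ne.symm h', hpq, rfl⟩
                simp [this, h, h']
          refine (sum_le_sum fun a _ => e a).trans ?_
          simp only [sum_add_distrib, sum_const,
            card_sdiff_of_subset (subset_univ _), card_univ, Fintype.card_fin, card_singleton,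
            nsmul_eq_mul, sum_ite_eq]
          rw [Nat.cast_sub (by omega), if_neg hpq]
          have h5 : (if f s₁ ∈ univ \ {f z} then (1 : ℝ) else 0) ≤ 1 := by
            split_ifs <;> norm_num
          have h6 : (if f s₂ ∈ univ \ {f z} then (1 : ℝ) else 0) ≤ 1 := by
            split_ifs <;> norm_num
          push_cast
          nlinarith
      · have : (x : ℝ) - 1 ≠ 0 := by linarith
        field_simp
    · have hNQ : N ⊆ Q := fun s hs =>
        (mem_insert.1 (hN hs)).resolve_left (fun h => hyN (h ▸ hs))
      have ih := ih hi' hNQ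
      have h3 := step_le_indep G hy (singleton_subset_iff.2 hz) (by simpa using hzy) _
        hwt (by
          intro f a
          have : N.image (Function.update f y a) = N.image f :=
            image_congr fun s hs => Function.update_of_ne (ne_of_mem_of_not_mem hs hyN) _ _
          simp only [hyψ f a, this])
      simp only [image_singleton, card_singleton, Nat.cast_one] at h3
      simp only [← mul_assoc, ← sum_mul] at h3
      simp only [mul_assoc] at h3
      refine h3.trans ?_
      rw [mul_comm]
      exact mul_le_mul_of_nonneg_left ih (by linarith)

end Counting

/-! ### Graphs containing a 4-clique -/

/-- Number of ordered pairs of adjacent vertices of `Q`, that is, twice the number of edges. -/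
noncomputable def darts (G : SimpleGraph V) (Q : Finset V) : ℕ :=
  ∑ a ∈ Q, ∑ b ∈ Q, if G.Adj a b then 1 else 0

lemma darts_insert (G : SimpleGraph V) {Q : Finset V} {y : V} (hy : y ∉ Q) :
    darts G (insert y Q) = darts G Q + 2 * #{z ∈ Q | G.Adj z y} := by
  unfold darts
  rw [sum_insert hy, sum_insert hy]
  simp only [sum_insert hy, sum_add_distrib, G.irrefl, if_false, card_filter]
  simp only [G.adj_comm y]
  ring

section Counting

variable [Fintype V] {x : ℕ}

/-- Along a build-up, each step adds at least one edge; the number of colorings gets exactly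
the factor `(x - 1) / x` per vertex if it is always one edge, and falls below that otherwise. -/
lemma build_darts (hx : 4 ≤ x) {G : SimpleGraph V} {P Q : Finset V} (h : Build G P Q)
    (hP : ∀ a ∈ P, ∀ b ∈ P, a ≠ b → G.Adj a b)
    (hpos : 0 < ∑ f : V → Fin x, ind G P f) :
    darts G P + 2 * (#Q - #P) ≤ darts G Q ∧
    (darts G Q = darts G P + 2 * (#Q - #P) →
      ∑ f : V → Fin x, ind G Q f =
        (((x : ℝ) - 1) / x) ^ (#Q - #P) * ∑ f : V → Fin x, ind G P f) ∧
    (darts G P + 2 * (#Q - #P) < darts G Q →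
      ∑ f : V → Fin x, ind G Q f <
        (((x : ℝ) - 1) / x) ^ (#Q - #P) * ∑ f : V → Fin x, ind G P f) := by
  have hX : (4 : ℝ) ≤ x := by exact_mod_cast hx
  have hr : 0 < ((x : ℝ) - 1) / x := div_pos (by linarith) (by linarith)
  induction h with
  | base => simp
  | @step Q y z hb hy hz hzy ih =>
    have hle := card_le_card hb.subset
    obtain ⟨ih1, ih2, ih3⟩ := ih
    rw [darts_insert G hy, card_insert_of_notMem hy, Nat.sub_add_comm hle, pow_succ]
    set k := #Q - #P
    have hd : 1 ≤ #{z ∈ Q | G.Adj z y} := card_pos.2 ⟨z, by simp [hz, hzy]⟩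
    have hxx : ∀ S c : ℝ, S ≤ (((x : ℝ) - 1) / x) * c ↔ (x : ℝ) * S ≤ ((x : ℝ) - 1) * c := by
      intro S c
      rw [div_mul_eq_mul_div, le_div_iff₀ (by linarith), mul_comm S]
    refine ⟨by omega, fun he => ?_, fun hlt => ?_⟩
    · have h1 : #{z ∈ Q | G.Adj z y} = 1 := by omega
      have ih := ih2 (by omega)
      have h2 := step_exact (x := x) G hy (fun _ => 1)
      obtain ⟨z', hz'⟩ := card_eq_one.1 h1
      have h3 : ∀ f : V → Fin x, ∑ a with ∀ z ∈ Q, G.Adj z y → f z ≠ a, (1 : ℝ) =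
          (x : ℝ) - 1 := by
        intro f
        have : (univ.filter fun a => ∀ z ∈ Q, G.Adj z y → f z ≠ a) = univ \ {f z'} := by
          ext a
          have hm : ∀ z, z ∈ Q ∧ G.Adj z y ↔ z = z' := fun z => by
            rw [← mem_filter (p := fun z => G.Adj z y), hz', mem_singleton]
          simp only [mem_filter, mem_univ, true_and, mem_sdiff, mem_singleton]
          constructor
          · intro h h'
            exact h z' ((hm z').2 rfl).1 ((hm z').2 rfl).2 h'.symm
          · intro h z hz hzy h'
            rw [(hm z).1 ⟨hz, hzy⟩] at h'
            exact h h'.symm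
        rw [this, sum_const, card_sdiff_of_subset (subset_univ _), nsmul_eq_mul, card_univ,
          Fintype.card_fin, card_singleton, Nat.cast_sub (by omega)]
        simp
      simp only [h3, mul_one, ← sum_mul] at h2
      rw [ih] at h2
      have hx0 : (x : ℝ) ≠ 0 := by linarith
      field_simp
      linarith
    · rw [mul_comm (_ ^ _), mul_assoc]
      by_cases hQ : darts G P + 2 * k < darts G Q
      · refine lt_of_le_of_lt ?_ (mul_lt_mul_of_pos_left (ih3 hQ) hr)
        have h2 := step_le_indep (x := x) G hy (singleton_subset_iff.2 hz) (by simpa using hzy)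
          (fun _ => 1) (fun _ => zero_le_one) (fun _ _ => rfl)
        simp only [image_singleton, card_singleton, Nat.cast_one, mul_one, one_mul,
          ← sum_mul] at h2
        rw [hxx]
        linarith
      · obtain ⟨s₁, hs₁, s₂, hs₂, hs⟩ := one_lt_card.1
          (show 1 < #{z ∈ Q | G.Adj z y} by omega)
        rw [mem_filter] at hs₁ hs₂
        have h2 := step_le_indep (x := x) (N := {s₁, s₂}) G hy
          (by simp [insert_subset_iff, hs₁.1, hs₂.1])
          (by simp [hs₁.2, hs₂.2]) (ind G P) (ind_nonneg G P) (by
            intro f a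
            unfold ind
            have : Proper G P (Function.update f y a) ↔ Proper G P f := by
              refine forall₂_congr fun b hb' => forall₂_congr fun c hc' => ?_
              have hyP : y ∉ P := fun h => hy (hb.subset h)
              rw [Function.update_of_ne (ne_of_mem_of_not_mem hb' hyP),
                Function.update_of_ne (ne_of_mem_of_not_mem hc' hyP)]
            simp only [this])
        have hPc : ∀ R : Finset V, P ⊆ R → ∀ f : V → Fin x,
            ind G R f * ind G P f = ind G R f := by
          intro R hR f
          unfold ind
          by_cases h : Proper G R f
          · have : Proper G P f := fun a ha b hb => h a (hR ha) b (hR hb)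
            simp [this]
          · simp [h]
        have h3 := pair_bound hx hb (ind G P) (ind_nonneg G P) (by
            intro w _ hwP f a
            unfold ind
            have : Proper G P (Function.update f w a) ↔ Proper G P f := by
              refine forall₂_congr fun b hb' => forall₂_congr fun c hc' => ?_
              rw [Function.update_of_ne (ne_of_mem_of_not_mem hb' hwP),
                Function.update_of_ne (ne_of_mem_of_not_mem hc' hwP)]
            simp only [this]) (by
            intro f hf a ha b hb' hab
            unfold ind at hf
            have hf : Proper G P f := by by_contra h; simp [h] at hf
            exact hf a ha b hb' (hP a ha b hb' hab)) (2 * x - 3) (by linarith)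
            s₁ s₂ hs₁.1 hs₂.1 hs
        have h4 : ∀ f : V → Fin x, (x : ℝ) - #(({s₁, s₂} : Finset V).image f) =
            ((2 * x - 3) + if f s₁ = f s₂ then 1 else -1) / 2 := by
          intro f
          by_cases h : f s₁ = f s₂
          · simp [image_insert, h]; ring
          · simp [image_insert, card_pair h, h]; ring
        simp only [h4] at h2
        rw [sum_congr rfl (fun f _ => hPc _ (hb.subset.trans (subset_insert _ _)) f)] at h2
        have h5 : ∑ f : V → Fin x, ind G Q f * (ind G P f *
            (((2 * x - 3) + if f s₁ = f s₂ then (1 : ℝ) else -1) / 2)) =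
            (∑ f : V → Fin x, ind G Q f * (ind G P f *
            ((2 * x - 3) + if f s₁ = f s₂ then (1 : ℝ) else -1))) / 2 := by
          rw [sum_div]; exact sum_congr rfl fun f _ => by ring
        rw [h5] at h2
        rw [div_mul_eq_mul_div, lt_div_iff₀ (by linarith)]
        have h6 : 0 < (((x : ℝ) - 1) / x) ^ k * ∑ f : V → Fin x, ind G P f :=
          mul_pos (pow_pos hr _) hpos
        nlinarith

lemma clique_count (G : SimpleGraph V) (P : Finset V)
    (hP : ∀ a ∈ P, ∀ b ∈ P, a ≠ b → G.Adj a b) :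
    (x : ℝ) ^ #P * ∑ f : V → Fin x, ind G P f =
      (x.descFactorial #P : ℝ) * (x : ℝ) ^ Fintype.card V := by
  induction P using Finset.induction_on with
  | empty => simp [ind, Proper]
  | insert y Q hy ih =>
    have ih := ih (fun a ha b hb => hP a (mem_insert_of_mem ha) b (mem_insert_of_mem hb))
    have h2 := step_exact (x := x) G hy (fun _ => 1)
    have h3 : ∀ f : V → Fin x, ind G Q f * ∑ a with ∀ z ∈ Q, G.Adj z y → f z ≠ a, (1 : ℝ) =
        ind G Q f * ((x - #Q : ℕ) : ℝ) := by
      intro f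
      by_cases hf : Proper G Q f
      · have : (univ.filter fun a => ∀ z ∈ Q, G.Adj z y → f z ≠ a) = univ \ Q.image f := by
          ext a
          simp only [mem_filter, mem_univ, true_and, mem_sdiff, mem_image, not_exists, not_and]
          refine forall₂_congr fun z hz => ?_
          simp [hP z (mem_insert_of_mem hz) y (mem_insert_self _ _)
            (ne_of_mem_of_not_mem hz hy)]
        rw [this, sum_const, card_sdiff_of_subset (subset_univ _), nsmul_eq_mul, mul_one,
          card_univ, Fintype.card_fin, card_image_of_injOn]
        intro a ha b hb hab
        by_contra hne
        exact hf a ha b hb (hP a (mem_insert_of_mem ha) b (mem_insert_of_mem hb) hne) hab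
      · simp [ind, hf]
    simp only [h3, mul_one, ← sum_mul] at h2
    rw [card_insert_of_notMem hy, pow_succ, Nat.descFactorial_succ, mul_assoc, h2, ← mul_assoc,
      ih]
    push_cast
    ring

end Counting

/-! ### Connectivity and gluing -/

/-- Every set of vertices of `Q` disjoint from `P` sends an edge to the rest of `Q`; for
`P = {u}` this is connectedness of the subgraph induced on `Q`. -/
def Rooted (G : SimpleGraph V) (P Q : Finset V) : Prop :=
  P ⊆ Q ∧ ∀ R ⊆ Q, Disjoint R P → R.Nonempty → ∃ a ∈ R, ∃ b ∈ Q \ R, G.Adj a b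

/-- The subgraph of `G` induced on `Q` is connected (phrased with vertex cuts). -/
def Conn (G : SimpleGraph V) (Q : Finset V) : Prop :=
  ∀ R ⊆ Q, R.Nonempty → R ≠ Q → ∃ a ∈ R, ∃ b ∈ Q \ R, G.Adj a b

/-- The subgraph of `G` induced on `Q` is `k`-colorable. -/
def Col (k : ℕ) (G : SimpleGraph V) (Q : Finset V) : Prop :=
  ∃ f : V → Fin k, Proper G Q f

lemma Rooted.build {G : SimpleGraph V} {P Q : Finset V} (h : Rooted G P Q) : Build G P Q := by
  have hne : (Q.powerset.filter (Build G P)).Nonempty :=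
    ⟨P, mem_filter.2 ⟨mem_powerset.2 h.1, Build.base⟩⟩
  obtain ⟨R, hR, hmax⟩ := exists_max_image _ card hne
  rw [mem_filter, mem_powerset] at hR
  by_cases hRQ : R = Q
  · exact hRQ ▸ hR.2
  · exfalso
    obtain ⟨a, ha, b, hb, hab⟩ := h.2 (Q \ R) sdiff_subset
      (disjoint_of_subset_right hR.2.subset sdiff_disjoint)
      (sdiff_nonempty.2 fun h' => hRQ (hR.1.antisymm h'))
    rw [mem_sdiff] at ha
    have hbR : b ∈ R := by
      by_contra hbR
      rw [mem_sdiff, mem_sdiff] at hb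
      exact hb.2 ⟨hb.1, hbR⟩
    have := hmax (insert a R) (mem_filter.2 ⟨mem_powerset.2
      (insert_subset ha.1 hR.1), Build.step hR.2 ha.2 hbR hab.symm⟩)
    rw [card_insert_of_notMem ha.2] at this
    omega

lemma Conn.rooted {G : SimpleGraph V} {P Q : Finset V} (h : Conn G Q) (hP : P.Nonempty)
    (hPQ : P ⊆ Q) : Rooted G P Q := by
  refine ⟨hPQ, fun R hR hd hne => h R hR hne ?_⟩
  rintro rfl
  obtain ⟨p, hp⟩ := hP
  exact (disjoint_left.1 hd) (hPQ hp) hp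

lemma Rooted.conn {G : SimpleGraph V} {u : V} {Q : Finset V} (h : Rooted G {u} Q) :
    Conn G Q := by
  intro R hR hne hRQ
  by_cases hu : u ∈ R
  · obtain ⟨a, ha, b, hb, hab⟩ := h.2 (Q \ R) sdiff_subset (by simp [hu])
      (sdiff_nonempty.2 fun h' => hRQ (hR.antisymm h'))
    rw [Finset.sdiff_sdiff_eq_self hR] at hb
    exact ⟨b, hb, a, ha, hab.symm⟩
  · exact h.2 R hR (by simp [hu]) hne

/-- Proper colorings of two sides can be combined if, up to a permutation of the colors, they
agree on the overlap. -/
lemma glue {k : ℕ} {G : SimpleGraph V} {A B : Finset V}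
    (hcross : ∀ a ∈ A, a ∉ B → ∀ b ∈ B, b ∉ A → ¬ G.Adj a b)
    {f g : V → Fin k} (hf : Proper G A f) (hg : Proper G B g) (σ : Equiv.Perm (Fin k))
    (hσ : ∀ s ∈ A, s ∈ B → σ (f s) = g s) : Col k G (A ∪ B) := by
  refine ⟨fun v => if v ∈ A then σ (f v) else g v, fun a ha b hb hab => ?_⟩
  have hval : ∀ v ∈ B, (if v ∈ A then σ (f v) else g v) = g v := by
    intro v hv
    split_ifs with h
    · exact hσ v h hv
    · rfl
  by_cases haB : a ∈ B <;> by_cases hbB : b ∈ B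
  · simp only [hval a haB, hval b hbB]; exact hg a haB b hbB hab
  · have hbA : b ∈ A := (mem_union.1 hb).resolve_right hbB
    by_cases haA : a ∈ A
    · simp only [haA, hbA, if_true]; exact fun h => hf a haA b hbA hab (σ.injective h)
    · exact absurd hab.symm (hcross b hbA hbB a haB haA)
  · have haA : a ∈ A := (mem_union.1 ha).resolve_right haB
    by_cases hbA : b ∈ A
    · simp only [haA, hbA, if_true]; exact fun h => hf a haA b hbA hab (σ.injective h)
    · exact absurd hab (hcross a haA haB b hbB hbA)
  · have haA : a ∈ A := (mem_union.1 ha).resolve_right haB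
    have hbA : b ∈ A := (mem_union.1 hb).resolve_right hbB
    simp only [haA, hbA, if_true]; exact fun h => hf a haA b hbA hab (σ.injective h)

/-- A permutation moving one pair of values to another pair with the same equality pattern. -/
lemma exists_perm {K : Type} (a b c d : K) (h : a = b ↔ c = d) :
    ∃ σ : Equiv.Perm K, σ a = c ∧ σ b = d := by
  by_cases hab : a = b
  · obtain rfl := hab
    obtain rfl := h.1 rfl
    exact ⟨Equiv.swap a c, by simp, by simp⟩
  · have hcd : c ≠ d := fun h' => hab (h.2 h')
    refine ⟨Equiv.swap (Equiv.swap a c b) d * Equiv.swap a c, ?_, ?_⟩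
    · rw [Equiv.Perm.mul_apply, Equiv.swap_apply_left]
      refine Equiv.swap_apply_of_ne_of_ne (fun h' => ?_) hcd
      have := (Equiv.swap a c).injective ((Equiv.swap_apply_left a c).trans h')
      exact hab this
    · simp


/-! ### Splitting a critical graph at a two-vertex cut -/

lemma Proper.mono {K : Type} {G : SimpleGraph V} {A B : Finset V} {f : V → K} (hAB : A ⊆ B)
    (h : Proper G B f) : Proper G A f :=
  fun a ha b hb => h a (hAB ha) b (hAB hb)

/-- Two sides that meet in at most one vertex can always be glued. -/
lemma glue_one {k : ℕ} {G : SimpleGraph V} {A B : Finset V} (w : V)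
    (hcross : ∀ a ∈ A, a ∉ B → ∀ b ∈ B, b ∉ A → ¬ G.Adj a b)
    (hw : ∀ s ∈ A, s ∈ B → s = w) (hA : Col k G A) (hB : Col k G B) : Col k G (A ∪ B) := by
  obtain ⟨f, hf⟩ := hA
  obtain ⟨g, hg⟩ := hB
  refine glue hcross hf hg (Equiv.swap (f w) (g w)) fun s hsA hsB => ?_
  rw [hw s hsA hsB, Equiv.swap_apply_left]

/-- A coloring with `3` colors in which `u` is recolored with a fourth one. -/
noncomputable def fresh (f : V → Fin 3) (u : V) : V → Fin 4 :=
  fun v => if v = u then 3 else (f v).castSucc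

lemma fresh_ne {f : V → Fin 3} {u a b : V} (hab : a ≠ b)
    (h : a ≠ u → b ≠ u → f a ≠ f b) : fresh f u a ≠ fresh f u b := by
  unfold fresh
  have h3 : ∀ c : Fin 3, c.castSucc ≠ (3 : Fin 4) := by decide
  by_cases ha : a = u
  · have hb : b ≠ u := fun hb => hab (ha.trans hb.symm)
    simp only [ha, hb, if_true, if_false]
    exact (h3 _).symm
  · by_cases hb : b = u
    · simp only [ha, hb, if_true, if_false]
      exact h3 _
    · simp only [ha, hb, if_false]
      exact fun h' => h ha hb (Fin.castSucc_injective _ h')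

/-- `G` with the edge `uv` added. -/
def addEdge (G : SimpleGraph V) (u v : V) : SimpleGraph V where
  Adj a b := a ≠ b ∧ (G.Adj a b ∨ (a = u ∧ b = v) ∨ (a = v ∧ b = u))
  symm := ⟨fun a b h => ⟨h.1.symm, by
    rcases h.2 with h | h | h
    · exact Or.inl h.symm
    · exact Or.inr (Or.inr h.symm)
    · exact Or.inr (Or.inl h.symm)⟩⟩
  loopless := ⟨fun a h => h.1 rfl⟩

/-- `G` with `u` made adjacent to all neighbors of `v`. On vertex sets avoiding `v` this is the
graph obtained by identifying `v` with `u`. -/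
def merge (G : SimpleGraph V) (u v : V) : SimpleGraph V where
  Adj a b := a ≠ b ∧ (G.Adj a b ∨ (a = u ∧ G.Adj v b) ∨ (b = u ∧ G.Adj v a))
  symm := ⟨fun a b h => ⟨h.1.symm, by
    rcases h.2 with h | h | h
    · exact Or.inl h.symm
    · exact Or.inr (Or.inr h)
    · exact Or.inr (Or.inl h)⟩⟩
  loopless := ⟨fun a h => h.1 rfl⟩

/-- The maximum `(x)↓4 (x-1)^(m-4)` of the theorem as a proportion of all `x^m` maps, written so
that only the exponent `m - 1` depends on `m`; used for `m ≥ 4`. -/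
noncomputable def bound (x m : ℕ) : ℝ :=
  ((x : ℝ) - 2) * (x - 3) / ((x : ℝ) - 1) ^ 2 * (((x : ℝ) - 1) / x) ^ (m - 1)

/-- Setting of the main case: `Q` is the union of two sides `A`, `B` that meet exactly in
`u`, `v` and are not joined by other edges, and `G[Q]` is connected and not 3-colorable although
every `G[Q']` with `Q' ⊂ Q` is. -/
structure Cut (G : SimpleGraph V) (Q A B : Finset V) (u v : V) : Prop where
  union : A ∪ B = Q
  inter : ∀ s, s ∈ A ∧ s ∈ B ↔ s = u ∨ s = v
  cross : ∀ a ∈ A, a ∉ B → ∀ b ∈ B, b ∉ A → ¬ G.Adj a b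
  ne : u ≠ v
  nadj : ¬ G.Adj u v
  conn : Conn G Q
  col : ¬ Col 3 G Q
  crit : ∀ R ⊂ Q, Col 3 G R

namespace Cut

variable {G : SimpleGraph V} {Q A B : Finset V} {u v : V}

lemma symm (h : Cut G Q A B u v) : Cut G Q B A u v where
  union := by rw [union_comm, h.union]
  inter := fun s => and_comm.trans (h.inter s)
  cross := fun a ha haA b hb hbB hab => h.cross b hb hbB a ha haA hab.symm
  ne := h.ne
  nadj := h.nadj
  conn := h.conn
  col := h.col
  crit := h.crit

lemma huA (h : Cut G Q A B u v) : u ∈ A := ((h.inter u).2 (Or.inl rfl)).1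
lemma hvA (h : Cut G Q A B u v) : v ∈ A := ((h.inter v).2 (Or.inr rfl)).1
lemma hAQ (h : Cut G Q A B u v) : A ⊆ Q := h.union ▸ subset_union_left

/-- Every set of vertices of one side that avoids the cut sends an edge to the rest of that
side. -/
lemma edge (h : Cut G Q A B u v) {R : Finset V} (hR : R ⊆ A) (hu : u ∉ R) (hv : v ∉ R)
    (hne : R.Nonempty) : ∃ a ∈ R, ∃ b ∈ A \ R, G.Adj a b := by
  obtain ⟨a, ha, b, hb, hab⟩ := h.conn R (hR.trans h.hAQ) hne
    (fun h' => hu (h' ▸ h.hAQ h.huA))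
  rw [mem_sdiff] at hb
  refine ⟨a, ha, b, mem_sdiff.2 ⟨?_, hb.2⟩, hab⟩
  by_contra hbA
  have hbB : b ∈ B := by
    have := hb.1
    rw [← h.union, mem_union] at this
    exact this.resolve_left hbA
  refine h.cross a (hR ha) (fun haB => ?_) b hbB hbA hab
  rcases (h.inter a).1 ⟨hR ha, haB⟩ with rfl | rfl
  · exact hu ha
  · exact hv ha

lemma rooted (h : Cut G Q A B u v) : Rooted G {u, v} A := by
  refine ⟨by simp [insert_subset_iff, h.huA, h.hvA], fun R hR hd hne => ?_⟩
  simp only [disjoint_insert_right, disjoint_singleton_right] at hd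
  exact h.edge hR hd.1 hd.2 hne

lemma conn_addEdge (h : Cut G Q A B u v) : Conn (addEdge G u v) A := by
  refine Rooted.conn (u := u) ⟨by simp [h.huA], fun R hR hd hne => ?_⟩
  rw [disjoint_singleton_right] at hd
  by_cases hv : v ∈ R
  · exact ⟨v, hv, u, mem_sdiff.2 ⟨h.huA, hd⟩, h.ne.symm, Or.inr (Or.inr ⟨rfl, rfl⟩)⟩
  · obtain ⟨a, ha, b, hb, hab⟩ := h.edge hR hd hv hne
    exact ⟨a, ha, b, hb, hab.ne, Or.inl hab⟩

lemma conn_merge (h : Cut G Q A B u v) : Conn (merge G u v) (A.erase v) := by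
  refine Rooted.conn (u := u) ⟨by simp [h.huA, h.ne], fun R hR hd hne => ?_⟩
  rw [disjoint_singleton_right] at hd
  have hv : v ∉ R := fun hv => (mem_erase.1 (hR hv)).1 rfl
  obtain ⟨a, ha, b, hb, hab⟩ := h.edge (hR.trans (erase_subset _ _)) hd hv hne
  rw [mem_sdiff] at hb
  by_cases hbv : b = v
  · subst hbv
    exact ⟨a, ha, u, mem_sdiff.2 ⟨mem_erase.2 ⟨h.ne, h.huA⟩, hd⟩,
      fun h' => hd (h' ▸ ha), Or.inr (Or.inr ⟨rfl, hab.symm⟩)⟩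
  · exact ⟨a, ha, b, mem_sdiff.2 ⟨mem_erase.2 ⟨hbv, hb.1⟩, hb.2⟩, hab.ne, Or.inl hab⟩

/-- A critical graph has no cut vertex, so one side minus a vertex still hangs together from
`u` and `v`. -/
lemma rooted_erase (h : Cut G Q A B u v) {w : V} (hwu : w ≠ u) (hwv : w ≠ v) :
    Rooted G {u, v} (A.erase w) := by
  refine ⟨by simp [insert_subset_iff, h.huA, h.hvA, hwu.symm, hwv.symm],
    fun R hR hd hne => ?_⟩
  simp only [disjoint_insert_right, disjoint_singleton_right] at hd
  by_contra hno
  push Not at hno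
  have hRA : R ⊆ A := hR.trans (erase_subset _ _)
  have huQ := h.hAQ h.huA
  by_cases hwA : w ∈ A
  · have hwQ := h.hAQ hwA
    apply h.col
    have hsub : insert w R ⊂ Q := by
      refine ⟨insert_subset hwQ (hRA.trans h.hAQ), fun h' => ?_⟩
      rcases mem_insert.1 (h' huQ) with h1 | h1
      · exact hwu h1.symm
      · exact hd.1 h1
    obtain ⟨r, hr⟩ := hne
    have hsub' : Q \ R ⊂ Q :=
      ⟨sdiff_subset, fun h' => (mem_sdiff.1 (h' (h.hAQ (hRA hr)))).2 hr⟩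
    have hun : insert w R ∪ Q \ R = Q := by
      ext a
      simp only [mem_union, mem_insert, mem_sdiff]
      constructor
      · rintro ((rfl | ha) | ha)
        · exact hwQ
        · exact h.hAQ (hRA ha)
        · exact ha.1
      · intro ha
        by_cases haR : a ∈ R
        · exact Or.inl (Or.inr haR)
        · exact Or.inr ⟨ha, haR⟩
    rw [← hun]
    refine glue_one w ?_ ?_ (h.crit _ hsub) (h.crit _ hsub')
    · intro a ha haQR b hb hbR hab
      rw [mem_insert] at ha hbR
      rw [mem_sdiff] at hb haQR
      push Not at hbR
      have haR : a ∈ R := by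
        rcases ha with rfl | ha
        · by_contra haR; exact haQR ⟨hwQ, haR⟩
        · exact ha
      have haA := hRA haR
      by_cases hbA : b ∈ A
      · exact hno a haR b (mem_sdiff.2 ⟨mem_erase.2 ⟨hbR.1, hbA⟩, hb.2⟩) hab
      · have hbB : b ∈ B := by
          have := hb.1
          rw [← h.union, mem_union] at this
          exact this.resolve_left hbA
        refine h.cross a haA (fun haB => ?_) b hbB hbA hab
        rcases (h.inter a).1 ⟨haA, haB⟩ with rfl | rfl
        · exact hd.1 haR
        · exact hd.2 haR
    · intro s hs hs'
      exact (mem_insert.1 hs).resolve_right (mem_sdiff.1 hs').2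
  · rw [erase_eq_of_notMem hwA] at hno
    obtain ⟨a, ha, b, hb, hab⟩ := h.edge hRA hd.1 hd.2 hne
    exact hno a ha b hb hab

/-- In a critical non-3-colorable graph all degrees are at least `3`. -/
lemma degree (h : Cut G Q A B u v) {w : V} (hwA : w ∈ A) (hwu : w ≠ u) (hwv : w ≠ v) :
    3 ≤ #{z ∈ A.erase w | G.Adj z w} := by
  by_contra hlt
  push Not at hlt
  have hwQ := h.hAQ hwA
  obtain ⟨f, hf⟩ := h.crit (Q.erase w) (erase_ssubset hwQ)
  have hcard : #({z ∈ A.erase w | G.Adj z w}.image f) < #(univ : Finset (Fin 3)) :=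
    lt_of_le_of_lt card_image_le (by simpa using hlt)
  obtain ⟨c, -, hc⟩ := exists_mem_notMem_of_card_lt_card hcard
  have hc' : ∀ z ∈ Q, G.Adj z w → f z ≠ c := by
    rintro z hz hzw rfl
    have hzA : z ∈ A := by
      by_contra hzA
      have hzB : z ∈ B := by
        rw [← h.union, mem_union] at hz
        exact hz.resolve_left hzA
      refine h.cross w hwA (fun hwB => ?_) z hzB hzA hzw.symm
      rcases (h.inter w).1 ⟨hwA, hwB⟩ with h1 | h1
      · exact hwu h1
      · exact hwv h1
    exact hc (mem_image_of_mem _ (mem_filter.2 ⟨mem_erase.2 ⟨hzw.ne, hzA⟩, hzw⟩))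
  refine h.col ⟨Function.update f w c, fun a ha b hb hab => ?_⟩
  by_cases haw : a = w
  · subst haw
    rw [Function.update_self, Function.update_of_ne hab.ne']
    exact (hc' b hb hab.symm).symm
  · by_cases hbw : b = w
    · subst hbw
      rw [Function.update_self, Function.update_of_ne haw]
      exact hc' a ha hab
    · rw [Function.update_of_ne haw, Function.update_of_ne hbw]
      exact hf a (mem_erase.2 ⟨haw, ha⟩) b (mem_erase.2 ⟨hbw, hb⟩) hab

/-- If `u`, `v` receive equal colors in all 3-colorings of `A` and different ones in all
3-colorings of `B`, then `A` with the edge `uv` and `B` with `u`, `v` identified are smaller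
connected 4-chromatic graphs. Colorings of `G[Q]` with `f u ≠ f v` extend colorings of the former
to `B`, where a vertex with three neighbors saves a factor of about `(x-2)/(x-1)`; those
with `f u = f v` extend colorings of the latter to `A`. The two contributions add up to less
than the bound. -/
lemma count_lt [Fintype V] {x : ℕ} (hx : 4 ≤ x) (h : Cut G Q A B u v) (hBA : ¬ B ⊆ A)
    (hAB : ¬ A ⊆ B)
    (heq : ∀ f : V → Fin 3, Proper G A f → f u = f v)
    (hneq : ∀ f : V → Fin 3, Proper G B f → f u ≠ f v)
    (ih : ∀ Q' : Finset V, #Q' < #Q → ∀ G' : SimpleGraph V, Conn G' Q' → Col 4 G' Q' →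
      ¬ Col 3 G' Q' →
      ∑ f : V → Fin x, ind G' Q' f ≤ bound x #Q' * (x : ℝ) ^ Fintype.card V) :
    ∑ f : V → Fin x, ind G Q f < bound x #Q * (x : ℝ) ^ Fintype.card V := by
  have hX : (4 : ℝ) ≤ x := by exact_mod_cast hx
  have hr : 0 < ((x : ℝ) - 1) / x := div_pos (by linarith) (by linarith)
  obtain ⟨w, hwB, hwA⟩ := not_subset.1 hBA
  obtain ⟨w', hwA', hwB'⟩ := not_subset.1 hAB
  have hAss : A ⊂ Q := ⟨h.hAQ, fun h' => hwA (h' (h.symm.hAQ hwB))⟩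
  have hBss : B ⊂ Q := ⟨h.symm.hAQ, fun h' => hwB' (h' (h.hAQ hwA'))⟩
  have hwu : w ≠ u := fun h' => hwA (h' ▸ h.huA)
  have hwv : w ≠ v := fun h' => hwA (h' ▸ h.hvA)
  have hcuv : #({u, v} : Finset V) = 2 := card_pair h.ne
  have hcard : #A + #B = #Q + 2 := by
    rw [← card_union_add_card_inter, h.union, ← hcuv]
    congr 2
    ext s
    rw [mem_inter, h.inter s]; simp
  have hA3 : 3 ≤ #A := by
    have : insert w' {u, v} ⊆ A := by
      simp [insert_subset_iff, hwA', h.huA, h.hvA]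
    have := card_le_card this
    rw [card_insert_of_notMem, hcuv] at this
    · exact this
    · simp only [mem_insert, mem_singleton, not_or]
      exact ⟨fun h' => hwB' (h' ▸ h.symm.huA), fun h' => hwB' (h' ▸ h.symm.hvA)⟩
  have hB4 : 4 ≤ #B := by
    have h1 := h.symm.degree hwB hwu hwv
    have h2 := card_le_card (filter_subset (fun z => G.Adj z w) (B.erase w))
    rw [card_erase_of_mem hwB] at h2
    omega
  obtain ⟨fA, hfA⟩ := h.crit A hAss
  obtain ⟨fB, hfB⟩ := h.crit B hBss
  have key₁ := ih A (card_lt_card hAss) (addEdge G u v) h.conn_addEdge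
    ⟨fresh fA u, fun a ha b hb hab => fresh_ne hab.1 fun hau hbu => by
      rcases hab.2 with h1 | h1 | h1
      · exact hfA a ha b hb h1
      · exact absurd h1.1 hau
      · exact absurd h1.2 hbu⟩
    (by
      rintro ⟨f, hf⟩
      refine hf u h.huA v h.hvA ⟨h.ne, Or.inr (Or.inl ⟨rfl, rfl⟩)⟩ (heq f ?_)
      exact fun a ha b hb hab => hf a ha b hb ⟨hab.ne, Or.inl hab⟩)
  have key₂ := ih (B.erase v) ((card_erase_lt_of_mem h.symm.hvA).trans (card_lt_card hBss))
    (merge G u v) h.symm.conn_merge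
    ⟨fresh fB u, fun a ha b hb hab => fresh_ne hab.1 fun hau hbu => by
      rcases hab.2 with h1 | h1 | h1
      · exact hfB a (mem_of_mem_erase ha) b (mem_of_mem_erase hb) h1
      · exact absurd h1.1 hau
      · exact absurd h1.1 hbu⟩
    (by
      rintro ⟨f, hf⟩
      have hu : u ∈ B.erase v := mem_erase.2 ⟨h.ne, h.symm.huA⟩
      refine hneq (Function.update f v (f u)) ?_ (by simp [Function.update_of_ne h.ne])
      intro a ha b hb hab
      by_cases hav : a = v
      · subst hav
        rw [Function.update_self, Function.update_of_ne hab.ne']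
        have hbu : u ≠ b := fun h' => h.nadj (h' ▸ hab.symm)
        exact hf u hu b (mem_erase.2 ⟨hab.ne', hb⟩) ⟨hbu, Or.inr (Or.inl ⟨rfl, hab⟩)⟩
      · by_cases hbv : b = v
        · subst hbv
          rw [Function.update_self, Function.update_of_ne hav]
          have hau : a ≠ u := fun h' => h.nadj (h' ▸ hab)
          exact hf a (mem_erase.2 ⟨hav, ha⟩) u hu ⟨hau, Or.inr (Or.inr ⟨rfl, hab.symm⟩)⟩
        · rw [Function.update_of_ne hav, Function.update_of_ne hbv]
          exact hf a (mem_erase.2 ⟨hav, ha⟩) b (mem_erase.2 ⟨hbv, hb⟩) ⟨hab.ne, Or.inl hab⟩)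
  have hupd : ∀ (C : Finset V) (y : V), y ∉ C → ∀ (f : V → Fin x) a,
      ind G C (Function.update f y a) = ind G C f := by
    intro C y hy f a
    unfold ind
    have : Proper G C (Function.update f y a) ↔ Proper G C f := by
      refine forall₂_congr fun b hb' => forall₂_congr fun c hc' => ?_
      rw [Function.update_of_ne (ne_of_mem_of_not_mem hb' hy),
        Function.update_of_ne (ne_of_mem_of_not_mem hc' hy)]
    simp only [this]
  have hoff : ∀ y, y ∉ ({u, v} : Finset V) → u ≠ y ∧ v ≠ y := by
    intro y hy
    simp only [mem_insert, mem_singleton, not_or] at hy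
    exact ⟨Ne.symm hy.1, Ne.symm hy.2⟩
  -- Colorings with `f u ≠ f v`: the weight is the indicator of a coloring of `A` plus `uv`.
  have hind₁ : ∀ f : V → Fin x, ind G A f * (if f u = f v then 0 else 1) =
      ind (addEdge G u v) A f := by
    intro f
    unfold ind
    have : Proper (addEdge G u v) A f ↔ Proper G A f ∧ f u ≠ f v := by
      constructor
      · intro hf
        exact ⟨fun a ha b hb hab => hf a ha b hb ⟨hab.ne, Or.inl hab⟩,
          hf u h.huA v h.hvA ⟨h.ne, Or.inr (Or.inl ⟨rfl, rfl⟩)⟩⟩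
      · rintro ⟨h1, h2⟩ a ha b hb hab
        rcases hab.2 with h3 | ⟨rfl, rfl⟩ | ⟨rfl, rfl⟩
        · exact h1 a ha b hb h3
        · exact h2
        · exact h2.symm
    simp only [this, ite_and]
    split_ifs <;> simp_all
  set ψ : (V → Fin x) → ℝ := fun f => ind G A f * (if f u = f v then 0 else 1) with hψdef
  have hψ0 : ∀ f, 0 ≤ ψ f := fun f => by rw [hψdef]; simp only [hind₁]; exact ind_nonneg _ _ _
  have hψi : ∀ y ∈ B, y ∉ ({u, v} : Finset V) → Indep ψ y := by
    intro y hyB hy f a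
    have hyA : y ∉ A := fun hyA => hy (by simpa using (h.inter y).1 ⟨hyA, hyB⟩)
    simp only [hψdef, hupd A y hyA, Function.update_of_ne (hoff y hy).1,
      Function.update_of_ne (hoff y hy).2]
  have part₁ : (x : ℝ) * ∑ f : V → Fin x, ind G B f * ψ f ≤
      (((x : ℝ) - 1) / x) ^ (#B - 3) * (((x : ℝ) - 2 - 1 / (3 * ((x : ℝ) - 1))) *
        (bound x #A * (x : ℝ) ^ Fintype.card V)) := by
    obtain ⟨N, hN, hN3⟩ := exists_subset_card_eq (h.symm.degree hwB hwu hwv)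
    have h1 := step_le_indep (x := x) G (notMem_erase w B) (hN.trans (filter_subset _ _))
      (fun z hz => (mem_filter.1 (hN hz)).2) ψ hψ0 (hψi w hwB (by simp [hwu, hwv]))
    rw [insert_erase hwB] at h1
    refine h1.trans ?_
    refine (triple_bound hx (h.symm.rooted_erase hwu hwv).build ψ hψ0
      (fun y hy => hψi y (mem_of_mem_erase hy)) ?_ hcuv.le N
      (hN.trans (filter_subset _ _)) hN3).trans ?_
    · intro f hf a ha b hb hab
      have huv : f u ≠ f v := by
        intro h'
        simp [hψdef, h'] at hf
      simp only [mem_insert, mem_singleton] at ha hb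
      rcases ha with rfl | rfl <;> rcases hb with rfl | rfl
      · exact absurd rfl hab
      · exact huv
      · exact huv.symm
      · exact absurd rfl hab
    · rw [card_erase_of_mem hwB, hcuv, Nat.sub_sub]
      refine mul_le_mul_of_nonneg_left (mul_le_mul_of_nonneg_left ?_ ?_) (pow_nonneg hr.le _)
      · simp only [hψdef, hind₁]; exact key₁
      · have : 1 / (3 * ((x : ℝ) - 1)) ≤ 1 := by
          rw [div_le_one (by linarith)]; linarith
        linarith
  -- Colorings with `f u = f v`: the weight, summed over the color of `v`, is the indicator of
  -- a coloring of `B` with `u` and `v` identified.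
  set χ : (V → Fin x) → ℝ := fun f => ind G B f * (if f u = f v then 1 else 0) with hχdef
  have hχ0 : ∀ f, 0 ≤ χ f := fun f => by
    refine mul_nonneg (ind_nonneg _ _ _) ?_
    split_ifs <;> norm_num
  have hχi : ∀ y ∈ A, y ∉ ({u, v} : Finset V) → Indep χ y := by
    intro y hyA hy f a
    have hyB : y ∉ B := fun hyB => hy (by simpa using (h.inter y).1 ⟨hyA, hyB⟩)
    simp only [hχdef, hupd B y hyB, Function.update_of_ne (hoff y hy).1,
      Function.update_of_ne (hoff y hy).2]
  have hχsum : (x : ℝ) * ∑ f, χ f ≤ ∑ f : V → Fin x, ind (merge G u v) (B.erase v) f := by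
    rw [resample v]
    refine sum_le_sum fun f _ => ?_
    simp only [hχdef, Function.update_self, Function.update_of_ne h.ne]
    rw [sum_eq_single (f u) (fun a _ ha => by simp [Ne.symm ha]) (by simp)]
    rw [if_pos rfl, mul_one]
    unfold ind
    by_cases hp : Proper G B (Function.update f v (f u))
    · have : Proper (merge G u v) (B.erase v) f := by
        intro a ha b hb hab
        rw [mem_erase] at ha hb
        rcases hab.2 with h1 | ⟨rfl, h1⟩ | ⟨rfl, h1⟩
        · have := hp a ha.2 b hb.2 h1
          rwa [Function.update_of_ne ha.1, Function.update_of_ne hb.1] at this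
        · have := hp v h.symm.hvA b hb.2 h1
          rwa [Function.update_self, Function.update_of_ne hb.1] at this
        · have := hp v h.symm.hvA a ha.2 h1
          rw [Function.update_self, Function.update_of_ne ha.1] at this
          exact this.symm
      rw [if_pos hp, if_pos this]
    · rw [if_neg hp]; split_ifs <;> norm_num
  have part₂ : (x : ℝ) * ∑ f : V → Fin x, ind G A f * χ f ≤
      (((x : ℝ) - 1) / x) ^ (#A - 2) *
        (bound x (#B - 1) * (x : ℝ) ^ Fintype.card V) := by
    have h1 := build_le hx h.rooted.build χ hχ0 hχi
    rw [hcuv] at h1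
    rw [card_erase_of_mem h.symm.hvA] at key₂
    have h2 : ∑ f : V → Fin x, ind G {u, v} f * χ f ≤ ∑ f, χ f := sum_le_sum fun f _ => by
      have := mul_le_mul_of_nonneg_right (ind_le_one G {u, v} f) (hχ0 f)
      simpa using this
    have h3 : (x : ℝ) * ∑ f : V → Fin x, ind G {u, v} f * χ f ≤
        bound x (#B - 1) * (x : ℝ) ^ Fintype.card V :=
      (mul_le_mul_of_nonneg_left h2 (by linarith)).trans (hχsum.trans key₂)
    calc _ ≤ (x : ℝ) * ((((x : ℝ) - 1) / x) ^ (#A - 2) *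
          ∑ f : V → Fin x, ind G {u, v} f * χ f) :=
          mul_le_mul_of_nonneg_left h1 (by linarith)
      _ = (((x : ℝ) - 1) / x) ^ (#A - 2) *
          ((x : ℝ) * ∑ f : V → Fin x, ind G {u, v} f * χ f) := by ring
      _ ≤ _ := mul_le_mul_of_nonneg_left h3 (pow_nonneg hr.le _)
  have hsplit : ∑ f : V → Fin x, ind G Q f =
      ∑ f : V → Fin x, ind G B f * ψ f + ∑ f : V → Fin x, ind G A f * χ f := by
    rw [← sum_add_distrib]
    refine sum_congr rfl fun f _ => ?_
    have : ind G Q f = ind G A f * ind G B f := by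
      unfold ind
      have : Proper G Q f ↔ Proper G A f ∧ Proper G B f := by
        refine ⟨fun hf => ⟨hf.mono h.hAQ, hf.mono h.symm.hAQ⟩, ?_⟩
        rintro ⟨h1, h2⟩ a ha b hb hab
        rw [← h.union, mem_union] at ha hb
        by_cases haA : a ∈ A <;> by_cases hbA : b ∈ A
        · exact h1 a haA b hbA hab
        · by_cases haB : a ∈ B
          · exact h2 a haB b (hb.resolve_left hbA) hab
          · exact absurd hab (h.cross a haA haB b (hb.resolve_left hbA) hbA)
        · by_cases hbB : b ∈ B
          · exact h2 a (ha.resolve_left haA) b hbB hab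
          · exact absurd hab.symm (h.cross b hbA hbB a (ha.resolve_left haA) haA)
        · exact h2 a (ha.resolve_left haA) b (hb.resolve_left hbA) hab
      simp only [this, ite_and]
      split_ifs <;> simp
    rw [this]
    simp only [hψdef, hχdef]
    split_ifs <;> ring
  rw [hsplit]
  obtain ⟨i, hi⟩ : ∃ i, #A = i + 3 := ⟨_, (Nat.sub_add_cancel hA3).symm⟩
  obtain ⟨j, hj⟩ : ∃ j, #B = j + 4 := ⟨_, (Nat.sub_add_cancel hB4).symm⟩
  have hQ : #Q = i + j + 5 := by omega
  rw [hi, hj] at part₁ part₂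
  rw [hQ]
  simp only [bound, show i + 3 - 1 = i + 2 by omega, show j + 4 - 3 = j + 1 by omega,
    show i + 3 - 2 = i + 1 by omega, show j + 4 - 1 - 1 = j + 2 by omega,
    show i + j + 5 - 1 = i + j + 4 by omega] at part₁ part₂ ⊢
  set r := ((x : ℝ) - 1) / x with hrdef
  set α := ((x : ℝ) - 2) * (x - 3) / ((x : ℝ) - 1) ^ 2
  set T := (x : ℝ) ^ Fintype.card V
  have hα : 0 < α := div_pos (mul_pos (by linarith) (by linarith)) (by nlinarith)
  have hT : 0 < T := pow_pos (by linarith) _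
  have hpos : 0 < α * r ^ (i + j + 3) * T := mul_pos (mul_pos hα (pow_pos hr _)) hT
  have hε : 0 < 1 / (3 * ((x : ℝ) - 1)) := div_pos one_pos (by linarith)
  have hxr : (x : ℝ) * r = x - 1 := by rw [hrdef]; field_simp
  refine lt_of_mul_lt_mul_left (a := (x : ℝ)) ?_ (by linarith)
  calc (x : ℝ) * _ ≤ r ^ (j + 1) * (((x : ℝ) - 2 - 1 / (3 * ((x : ℝ) - 1))) *
        (α * r ^ (i + 2) * T)) + r ^ (i + 1) * (α * r ^ (j + 2) * T) := by
        rw [mul_add]; exact add_le_add part₁ part₂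
    _ = ((x : ℝ) - 1 - 1 / (3 * ((x : ℝ) - 1))) * (α * r ^ (i + j + 3) * T) := by ring
    _ < ((x : ℝ) - 1) * (α * r ^ (i + j + 3) * T) := by
        refine mul_lt_mul_of_pos_right ?_ hpos
        linarith
    _ = (x : ℝ) * (α * r ^ (i + j + 4) * T) := by rw [← hxr]; ring

end Cut

/-! ### The induction -/

lemma connected_of_cut {W : Type} (K : SimpleGraph W) [Nonempty W]
    (h : ∀ T : Set W, T.Nonempty → T ≠ Set.univ → ∃ a ∈ T, ∃ b ∉ T, K.Adj a b) :
    K.Connected := by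
  rw [connected_iff]
  refine ⟨fun a b => ?_, inferInstance⟩
  by_contra hab
  obtain ⟨c, hc, d, hd, hcd⟩ := h {w | K.Reachable a w} ⟨a, Reachable.refl a⟩
    (fun h' => hab (by rw [Set.eq_univ_iff_forall] at h'; exact h' b))
  exact hd (Reachable.trans hc hcd.reachable)

lemma conn_of_connected [Fintype V] {G : SimpleGraph V} (h : G.Connected) : Conn G univ := by
  intro R _ hne hR
  obtain ⟨a, ha⟩ := hne
  obtain ⟨b, hb⟩ : ∃ b, b ∉ R := by
    by_contra h'
    push Not at h'
    exact hR (eq_univ_iff_forall.2 h')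
  obtain ⟨p⟩ := h.preconnected a b
  obtain ⟨d, -, h1, h2⟩ := p.exists_boundary_dart (↑R) (by simpa using ha) (by simpa using hb)
  exact ⟨d.fst, by simpa using h1, d.snd, by simpa using h2, d.adj⟩

lemma four_le_card {G : SimpleGraph V} {Q : Finset V} (h : ¬ Col 3 G Q) : 4 ≤ #Q := by
  by_contra hlt
  push Not at hlt
  refine h ⟨fun v => if hv : v ∈ Q then Fin.castLE (by omega) (Q.equivFin ⟨v, hv⟩) else 0, ?_⟩
  intro a ha b hb hab heq
  simp only [ha, hb, dif_pos] at heq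
  have := Q.equivFin.injective (Fin.castLE_injective _ heq)
  exact hab.ne (congrArg Subtype.val this)

/-- The subgraph of `G` induced on `Q`, as a graph on the subtype. -/
abbrev sub (G : SimpleGraph V) (Q : Finset V) : SimpleGraph {v // v ∈ Q} :=
  G.comap Subtype.val

lemma sum_ind [Fintype V] {x : ℕ} (G : SimpleGraph V) (Q : Finset V) :
    ∑ f : V → Fin x, ind G Q f =
      chromPoly (sub G Q) x * (x : ℝ) ^ (Fintype.card V - #Q) := by
  let F : ({v // v ∈ Q} → Fin x) → ℝ := fun g =>
    if (∀ ⦃u v⦄, (sub G Q).Adj u v → g u ≠ g v) then 1 else 0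
  have h1 : ∑ f : V → Fin x, ind G Q f =
      ∑ p : ({v // v ∈ Q} → Fin x) × ({v // v ∉ Q} → Fin x), F p.1 := by
    refine Fintype.sum_equiv (Equiv.piEquivPiSubtypeProd (· ∈ Q) (fun _ => Fin x)) _ _ ?_
    intro f
    have : Proper G Q f ↔ ∀ ⦃u v⦄, (sub G Q).Adj u v →
        (Equiv.piEquivPiSubtypeProd (· ∈ Q) (fun _ => Fin x) f).1 u ≠
        (Equiv.piEquivPiSubtypeProd (· ∈ Q) (fun _ => Fin x) f).1 v := by
      constructor
      · intro hf u v huv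
        exact hf u u.2 v v.2 huv
      · intro hf a ha b hb hab
        exact hf (u := ⟨a, ha⟩) (v := ⟨b, hb⟩) hab
    simp only [ind, this, F]
  have h2 : Fintype.card {v // v ∉ Q} = Fintype.card V - #Q := by
    rw [Fintype.card_subtype_compl]; simp
  rw [h1, Fintype.sum_prod_type]
  simp only [sum_const, card_univ, Fintype.card_fun, h2, Fintype.card_fin, nsmul_eq_mul]
  rw [← mul_sum, mul_comm, chromPoly, Nat.card_eq_fintype_card, Fintype.card_subtype]
  simp [F]

lemma bound_eq {x m : ℕ} (hx : 4 ≤ x) (hm : 4 ≤ m) :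
    bound x m = (x.descFactorial 4 : ℝ) / (x : ℝ) ^ 4 * (((x : ℝ) - 1) / x) ^ (m - 4) := by
  obtain ⟨k, rfl⟩ : ∃ k, m = k + 4 := ⟨_, (Nat.sub_add_cancel hm).symm⟩
  obtain ⟨y, rfl⟩ : ∃ y, x = y + 4 := ⟨_, (Nat.sub_add_cancel hx).symm⟩
  simp only [bound, Nat.descFactorial_succ, Nat.descFactorial_zero, Nat.add_sub_cancel,
    show k + 4 - 1 = k + 3 by omega, show y + 4 - 3 = y + 1 by omega,
    show y + 4 - 2 = y + 2 by omega, show y + 4 - 1 = y + 3 by omega, Nat.sub_zero]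
  push_cast
  have h1 : (y : ℝ) + 4 ≠ 0 := by positivity
  have h2 : (y : ℝ) + 4 - 1 ≠ 0 := by
    have : (0 : ℝ) ≤ y := Nat.cast_nonneg y
    linarith
  rw [pow_add]
  field_simp
  ring

lemma clique_sum [Fintype V] {x : ℕ} (hx : 4 ≤ x) {G : SimpleGraph V} {P : Finset V}
    (hP4 : #P = 4) (hP : ∀ a ∈ P, ∀ b ∈ P, a ≠ b → G.Adj a b) :
    ∑ f : V → Fin x, ind G P f =
      (x.descFactorial 4 : ℝ) / (x : ℝ) ^ 4 * (x : ℝ) ^ Fintype.card V := by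
  have h := clique_count (x := x) G P hP
  rw [hP4] at h
  have hx0 : (x : ℝ) ≠ 0 := by positivity
  rw [div_mul_eq_mul_div, eq_div_iff (pow_ne_zero _ hx0), ← h, mul_comm]

lemma col_sub {k : ℕ} {G : SimpleGraph V} {Q : Finset V} (hk : 0 < k) :
    (sub G Q).Colorable k ↔ Col k G Q := by
  constructor
  · rintro ⟨c⟩
    refine ⟨fun v => if hv : v ∈ Q then c ⟨v, hv⟩ else ⟨0, hk⟩, fun a ha b hb hab => ?_⟩
    simp only [ha, hb, dif_pos]
    exact c.valid (v := ⟨a, ha⟩) (w := ⟨b, hb⟩) hab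
  · rintro ⟨f, hf⟩
    exact ⟨Coloring.mk (fun v => f v) (fun {a b} hab => hf a a.2 b b.2 hab)⟩

lemma chromaticNumber_eq_four {W : Type} (H : SimpleGraph W) :
    H.chromaticNumber = 4 ↔ H.Colorable 4 ∧ ¬ H.Colorable 3 := by
  have h4 : H.chromaticNumber ≤ 4 ↔ H.Colorable 4 := chromaticNumber_le_iff_colorable (n := 4)
  have h3 : H.chromaticNumber ≤ 3 ↔ H.Colorable 3 := chromaticNumber_le_iff_colorable (n := 3)
  rw [← h4, ← h3, not_le]
  constructor
  · intro h
    rw [h]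
    exact ⟨le_rfl, by decide⟩
  · rintro ⟨h1, h2⟩
    refine le_antisymm h1 ?_
    have := Order.add_one_le_of_lt h2
    exact this

/-- A cut of size at most two in a critical graph consists of two nonadjacent vertices `u`, `v`;
one side forces them to be equally colored and the other forces them to differ. Otherwise
3-colorings of the two sides could be glued. -/
lemma cut_dichotomy {G : SimpleGraph V} {Q S R : Finset V} (hS : S ⊆ Q) (hS2 : #S ≤ 2)
    (hconn : Conn G Q) (hcol : ¬ Col 3 G Q) (hcrit : ∀ R ⊂ Q, Col 3 G R)
    (hR : R ⊆ Q \ S) (hne : R.Nonempty) (hRne : R ≠ Q \ S)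
    (hno : ∀ a ∈ R, ∀ b ∈ (Q \ S) \ R, ¬ G.Adj a b) :
    ∃ A B u v, Cut G Q A B u v ∧ ¬ B ⊆ A ∧ ¬ A ⊆ B ∧
      (∀ f : V → Fin 3, Proper G A f → f u = f v) ∧
      (∀ f : V → Fin 3, Proper G B f → f u ≠ f v) := by
  set A := R ∪ S with hA
  set B := Q \ R with hB
  have hRQ : R ⊆ Q := hR.trans sdiff_subset
  have hRS : ∀ a ∈ R, a ∉ S := fun a ha => (mem_sdiff.1 (hR ha)).2
  have hAQ : A ⊆ Q := union_subset hRQ hS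
  have hun : A ∪ B = Q := by
    ext a
    simp only [hA, hB, mem_union, mem_sdiff]
    constructor
    · rintro ((h | h) | h)
      · exact hRQ h
      · exact hS h
      · exact h.1
    · tauto
  have hinter : ∀ s, s ∈ A ∧ s ∈ B ↔ s ∈ S := by
    intro s
    simp only [hA, hB, mem_union, mem_sdiff]
    constructor
    · tauto
    · exact fun h => ⟨Or.inr h, hS h, fun h' => hRS s h' h⟩
  have hcross : ∀ a ∈ A, a ∉ B → ∀ b ∈ B, b ∉ A → ¬ G.Adj a b := by
    intro a ha haB b hb hbA
    simp only [hA, hB, mem_union, mem_sdiff, not_and, not_not, not_or] at ha haB hb hbA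
    exact hno a (haB (hAQ (mem_union.2 ha))) b (mem_sdiff.2 ⟨mem_sdiff.2 ⟨hb.1, hbA.2⟩, hb.2⟩)
  obtain ⟨r, hr⟩ := hne
  obtain ⟨t, ht, htR⟩ : ∃ t ∈ Q \ S, t ∉ R := by
    by_contra h'
    push Not at h'
    exact hRne (hR.antisymm h')
  rw [mem_sdiff] at ht
  have htA : t ∉ A := by simp [hA, htR, ht.2]
  have htB : t ∈ B := by simp [hB, htR, ht.1]
  have hrA : r ∈ A := by simp [hA, hr]
  have hrB : r ∉ B := by simp [hB, hr]
  obtain ⟨f₀, hf₀⟩ := hcrit A ⟨hAQ, fun h' => htA (h' ht.1)⟩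
  obtain ⟨g₀, hg₀⟩ := hcrit B ⟨sdiff_subset, fun h' => hrB (h' (hRQ hr))⟩
  have hglue : ∀ u v, (∀ s ∈ S, s = u ∨ s = v) → ∀ f g : V → Fin 3, Proper G A f →
      Proper G B g → ¬ (f u = f v ↔ g u = g v) := by
    intro u v huv f g hf hg hiff
    obtain ⟨σ, h1, h2⟩ := exists_perm _ _ _ _ hiff
    refine hcol (hun ▸ glue hcross hf hg σ fun s hsA hsB => ?_)
    rcases huv s ((hinter s).1 ⟨hsA, hsB⟩) with rfl | rfl
    · exact h1
    · exact h2
  have hScard : #S = 2 := by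
    by_contra h2
    have h1 : #S ≤ 1 := by omega
    by_cases h0 : S.Nonempty
    · obtain ⟨w, hw⟩ := h0
      exact hglue w w (fun s hs => Or.inl (card_le_one.1 h1 s hs w hw)) f₀ g₀ hf₀ hg₀ (by simp)
    · rw [not_nonempty_iff_eq_empty] at h0
      exact hglue r r (by simp [h0]) f₀ g₀ hf₀ hg₀ (by simp)
  obtain ⟨u, v, huv, hSuv⟩ := card_eq_two.1 hScard
  have hSm : ∀ s, s ∈ S ↔ s = u ∨ s = v := by simp [hSuv]
  have hu := (hinter u).2 ((hSm u).2 (Or.inl rfl))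
  have hv := (hinter v).2 ((hSm v).2 (Or.inr rfl))
  have hg := hglue u v (fun s hs => (hSm s).1 hs)
  have hcut : Cut G Q A B u v :=
    { union := hun
      inter := fun s => (hinter s).trans (hSm s)
      cross := hcross
      ne := huv
      nadj := fun h => hg f₀ g₀ hf₀ hg₀
        (iff_of_false (hf₀ u hu.1 v hv.1 h) (hg₀ u hu.2 v hv.2 h))
      conn := hconn
      col := hcol
      crit := hcrit }
  by_cases hf : f₀ u = f₀ v
  · have h1 : ∀ g : V → Fin 3, Proper G B g → g u ≠ g v :=
      fun g hg' h' => hg f₀ g hf₀ hg' (iff_of_true hf h')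
    refine ⟨A, B, u, v, hcut, fun h => htA (h htB), fun h => hrB (h hrA), ?_, h1⟩
    intro f hf'
    by_contra h'
    exact hg f g₀ hf' hg₀ (iff_of_false h' (h1 g₀ hg₀))
  · have h1 : ∀ g : V → Fin 3, Proper G B g → g u = g v := by
      intro g hg'
      by_contra h'
      exact hg f₀ g hf₀ hg' (iff_of_false hf h')
    refine ⟨B, A, u, v, hcut.symm, fun h => hrB (h hrA), fun h => htA (h htB), h1, ?_⟩
    intro f hf' h'
    exact hg f g₀ hf' hg₀ (iff_of_true h' (h1 g₀ hg₀))

/-- `Q` contains four mutually adjacent vertices. -/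
def HasK4 (G : SimpleGraph V) (Q : Finset V) : Prop :=
  ∃ P ⊆ Q, #P = 4 ∧ ∀ a ∈ P, ∀ b ∈ P, a ≠ b → G.Adj a b

/-- An induced subgraph that is not 3-connected has a cut `S` of size at most two; `R` is a union
of components of what remains. -/
lemma exists_cut {G : SimpleGraph V} {Q : Finset V} (hQ : 4 ≤ #Q)
    (h : ¬ ∀ S : Finset {v // v ∈ Q}, #S ≤ 2 →
      ((sub G Q).induce ((↑S : Set {v // v ∈ Q})ᶜ)).Connected) :
    ∃ S R : Finset V, S ⊆ Q ∧ #S ≤ 2 ∧ R ⊆ Q \ S ∧ R.Nonempty ∧ R ≠ Q \ S ∧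
      ∀ a ∈ R, ∀ b ∈ (Q \ S) \ R, ¬ G.Adj a b := by
  push Not at h
  obtain ⟨S, hS2, hS⟩ := h
  set S' : Finset V := S.map (Function.Embedding.subtype _) with hS'
  have hS'Q : S' ⊆ Q := fun a ha => by
    obtain ⟨b, -, rfl⟩ := mem_map.1 ha
    exact b.2
  have hmem : ∀ a : {v // v ∈ Q}, a.1 ∈ S' ↔ a ∈ S := by
    intro a
    simp [hS']
  have hS'2 : #S' ≤ 2 := by rw [hS', card_map]; exact hS2
  by_contra hno
  push Not at hno
  apply hS
  obtain ⟨q, hq⟩ : (Q \ S').Nonempty := by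
    rw [← card_pos, card_sdiff_of_subset hS'Q]; omega
  rw [mem_sdiff] at hq
  have : Nonempty ↥((↑S : Set {v // v ∈ Q})ᶜ) :=
    ⟨⟨⟨q, hq.1⟩, fun h' => hq.2 ((hmem ⟨q, hq.1⟩).2 h')⟩⟩
  refine connected_of_cut _ fun T hT hT' => ?_
  have hTm : ∀ t : ↥((↑S : Set {v // v ∈ Q})ᶜ), t.1.1 ∈ Q \ S' := fun t =>
    mem_sdiff.2 ⟨t.1.2, fun h' => t.2 ((hmem t.1).1 h')⟩
  set R : Finset V := {a ∈ Q \ S' | ∃ t ∈ T, t.1.1 = a} with hR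
  have hRT : ∀ t : ↥((↑S : Set {v // v ∈ Q})ᶜ), t.1.1 ∈ R ↔ t ∈ T := by
    intro t
    rw [hR, mem_filter]
    constructor
    · rintro ⟨-, t', ht', h'⟩
      rwa [← Subtype.ext (Subtype.ext h')]
    · exact fun ht => ⟨hTm t, t, ht, rfl⟩
  obtain ⟨t, ht⟩ := hT
  obtain ⟨t', ht'⟩ := (Set.ne_univ_iff_exists_notMem T).1 hT'
  obtain ⟨a, ha, b, hb, hab⟩ := hno S' R hS'Q hS'2 (filter_subset _ _) ⟨_, (hRT t).2 ht⟩
    (fun h' => ht' ((hRT t').1 (h' ▸ hTm t')))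
  obtain ⟨-, s, hs, rfl⟩ := mem_filter.1 ha
  rw [mem_sdiff, mem_sdiff] at hb
  exact ⟨s, hs, ⟨⟨b, hb.1.1⟩, fun h' => hb.1.2 ((hmem _).2 h')⟩,
    fun h' => hb.2 ((hRT _).2 h'), hab⟩

/-- The upper bound, strict in the absence of a 4-clique, by induction on the number of
vertices. -/
lemma induction_bound [Fintype V] (x : ℕ) (hx : 4 ≤ x)
    (hyp : ∀ (W : Type) [Fintype W] (H : SimpleGraph W),
      H ≠ ⊤ →
      4 ≤ Fintype.card W →
      (∀ S : Finset W, S.card ≤ 2 → (H.induce ((↑S : Set W)ᶜ)).Connected) →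
      H.chromaticNumber = 4 →
      chromPoly H x < x * (x-1) * (x-2) * (x-3) * (x-1) ^ (Fintype.card W - 4))
    (m : ℕ) : ∀ Q : Finset V, #Q = m → ∀ G : SimpleGraph V, Conn G Q → Col 4 G Q → ¬ Col 3 G Q →
      ∑ f : V → Fin x, ind G Q f ≤ bound x #Q * (x : ℝ) ^ Fintype.card V ∧
      (¬ HasK4 G Q → ∑ f : V → Fin x, ind G Q f < bound x #Q * (x : ℝ) ^ Fintype.card V) := by
  have hX : (4 : ℝ) ≤ x := by exact_mod_cast hx
  have hr : 0 < ((x : ℝ) - 1) / x := div_pos (by linarith) (by linarith)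
  induction m using Nat.strong_induction_on with
  | _ m ih =>
  rintro Q rfl G hconn hcol4 hcol3
  have hQ4 := four_le_card hcol3
  by_cases hK : HasK4 G Q
  · refine ⟨?_, fun h => absurd hK h⟩
    obtain ⟨P, hPQ, hP4, hP⟩ := hK
    have hb := (hconn.rooted (card_pos.1 (by omega)) hPQ).build
    have h1 := build_le (x := x) hx hb (fun _ => 1) (fun _ => zero_le_one)
      (fun _ _ _ _ _ => rfl)
    simp only [mul_one] at h1
    rw [clique_sum hx hP4 hP, hP4] at h1
    rw [bound_eq hx hQ4]
    exact h1.trans (le_of_eq (by ring))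
  · suffices h : ∑ f : V → Fin x, ind G Q f < bound x #Q * (x : ℝ) ^ Fintype.card V from
      ⟨h.le, fun _ => h⟩
    by_cases hcrit : ∀ R ⊂ Q, Col 3 G R
    · by_cases h3 : ∀ S : Finset {v // v ∈ Q}, #S ≤ 2 →
        ((sub G Q).induce ((↑S : Set {v // v ∈ Q})ᶜ)).Connected
      · have hcard : Fintype.card {v // v ∈ Q} = #Q := by simp
        have h1 := hyp {v // v ∈ Q} (sub G Q) (by
            intro htop
            obtain ⟨P, hPQ, hP4⟩ := exists_subset_card_eq hQ4
            refine hK ⟨P, hPQ, hP4, fun a ha b hb hab => ?_⟩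
            have : (sub G Q).Adj ⟨a, hPQ ha⟩ ⟨b, hPQ hb⟩ := by
              rw [htop, top_adj]
              exact fun h' => hab (congrArg Subtype.val h')
            exact this) (hcard ▸ hQ4) h3
          ((chromaticNumber_eq_four _).2 ⟨(col_sub (by norm_num)).2 hcol4,
            fun h' => hcol3 ((col_sub (by norm_num)).1 h')⟩)
        rw [hcard] at h1
        have h2 : (chromPoly (sub G Q) x : ℝ) <
            (x.descFactorial 4 : ℝ) * ((x : ℝ) - 1) ^ (#Q - 4) := by
          have h3 : x * (x-1) * (x-2) * (x-3) = x.descFactorial 4 := by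
            simp only [Nat.descFactorial_succ, Nat.descFactorial_zero]
            simp only [Nat.sub_zero, mul_one]; ring
          rw [h3] at h1
          have h4 : (chromPoly (sub G Q) x : ℝ) <
            ((x.descFactorial 4 * (x - 1) ^ (#Q - 4) : ℕ) : ℝ) := by exact_mod_cast h1
          rwa [Nat.cast_mul, Nat.cast_pow, Nat.cast_sub (by omega), Nat.cast_one] at h4
        have hx0 : (0 : ℝ) < x := by linarith
        rw [sum_ind]
        refine (mul_lt_mul_of_pos_right h2 (pow_pos hx0 _)).trans_le (le_of_eq ?_)
        have hle : #Q ≤ Fintype.card V := card_le_univ Q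
        have h5 : (x : ℝ) ^ Fintype.card V =
            (x : ℝ) ^ 4 * (x : ℝ) ^ (#Q - 4) * (x : ℝ) ^ (Fintype.card V - #Q) := by
          rw [← pow_add, ← pow_add]; congr 1; omega
        rw [bound_eq hx hQ4, h5, div_pow]
        field_simp
      · obtain ⟨S, R, hS, hS2, hR, hne, hRne, hno⟩ := exists_cut hQ4 h3
        obtain ⟨A, B, u, v, hcut, hBA, hAB, heq, hneq⟩ :=
          cut_dichotomy hS hS2 hconn hcol3 hcrit hR hne hRne hno
        exact hcut.count_lt hx hBA hAB heq hneq
          fun Q' hQ' G' h1 h2 h3 => (ih _ hQ' Q' rfl G' h1 h2 h3).1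
    · -- A smallest subset that is not 3-colorable is connected, and `Q` is grown from it.
      push Not at hcrit
      obtain ⟨R, hRQ, hR3⟩ := hcrit
      have hfam : (Q.powerset.filter fun R => ¬ Col 3 G R).Nonempty :=
        ⟨R, mem_filter.2 ⟨mem_powerset.2 hRQ.1, hR3⟩⟩
      obtain ⟨R', hR', hmin⟩ := exists_min_image _ card hfam
      have hRR' := hmin R (mem_filter.2 ⟨mem_powerset.2 hRQ.1, hR3⟩)
      rw [mem_filter, mem_powerset] at hR'
      have hlt : #R' < #Q := hRR'.trans_lt (card_lt_card hRQ)
      have hsmall : ∀ T ⊂ R', Col 3 G T := by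
        intro T hT
        by_contra h'
        have := hmin T (mem_filter.2 ⟨mem_powerset.2 (hT.1.trans hR'.1), h'⟩)
        have := card_lt_card hT
        omega
      have hconn' : Conn G R' := by
        intro T hT hTne hTR
        by_contra hno
        push Not at hno
        have h1 : T ⊂ R' := hT.ssubset_of_ne hTR
        have h2 : R' \ T ⊂ R' := sdiff_ssubset hT hTne
        obtain ⟨w, hw⟩ := hTne
        apply hR'.2
        rw [← union_sdiff_of_subset hT]
        refine glue_one w (fun a ha _ b hb _ => hno a ha b hb) ?_ (hsmall _ h1) (hsmall _ h2)
        intro s hs hs'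
        exact absurd hs (mem_sdiff.1 hs').2
      have hlt' := (ih _ hlt R' rfl G hconn'
        (hcol4.imp fun f hf => hf.mono hR'.1) hR'.2).2
        (fun ⟨P, hP, h⟩ => hK ⟨P, hP.trans hR'.1, h⟩)
      have h4 := four_le_card hR'.2
      have hb := (hconn.rooted (card_pos.1 (by omega)) hR'.1).build
      have h1 := build_le (x := x) hx hb (fun _ => 1) (fun _ => zero_le_one)
        (fun _ _ _ _ _ => rfl)
      simp only [mul_one] at h1
      refine h1.trans_lt ((mul_lt_mul_of_pos_left hlt' (pow_pos hr _)).trans_le (le_of_eq ?_))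
      rw [← mul_assoc]
      congr 1
      rw [bound_eq hx h4, bound_eq hx hQ4, mul_left_comm, ← pow_add]
      congr 2
      omega

lemma darts_univ [Fintype V] (G : SimpleGraph V) :
    darts G univ = 2 * Nat.card G.edgeSet := by
  rw [Nat.card_eq_fintype_card, ← edgeFinset_card, ← sum_degrees_eq_twice_card_edges]
  unfold darts
  refine sum_congr rfl fun a _ => ?_
  rw [← card_filter, ← card_neighborFinset_eq_degree, neighborFinset_eq_filter]

end

end Tomescu

/-- **Lemma 3.1** (reduction to 3-connected graphs).  Let `x ≥ 4` be a natural number.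
Suppose that every noncomplete 3-connected 4-chromatic finite simple graph `H`
satisfies `π(H,x) < (x)↓4 · (x-1)^(|V(H)|-4)`.  Then every connected 4-chromatic
finite simple graph `G` of order `n` satisfies `π(G,x) ≤ (x)↓4 · (x-1)^(n-4)`, with
equality if and only if `G` has clique number `4` and exactly `n + 2` edges. -/
theorem statement_1 (x : ℕ) (hx : 4 ≤ x)
    (hyp : ∀ (W : Type) [Fintype W] (H : SimpleGraph W),
      H ≠ ⊤ →
      4 ≤ Fintype.card W →
      (∀ S : Finset W, S.card ≤ 2 → (H.induce ((↑S : Set W)ᶜ)).Connected) →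
      H.chromaticNumber = 4 →
      chromPoly H x < x * (x-1) * (x-2) * (x-3) * (x-1) ^ (Fintype.card W - 4))
    (V : Type) [Fintype V] (G : SimpleGraph V) (n : ℕ) (hn : Fintype.card V = n)
    (hconn : G.Connected) (hchrom : G.chromaticNumber = 4) :
    chromPoly G x ≤ x * (x-1) * (x-2) * (x-3) * (x-1) ^ (n - 4) ∧
    (chromPoly G x = x * (x-1) * (x-2) * (x-3) * (x-1) ^ (n - 4) ↔
      (∃ s : Finset V, G.IsNClique 4 s) ∧ (∀ s : Finset V, ¬ G.IsNClique 5 s) ∧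
        Nat.card G.edgeSet = n + 2) := by
  classical
  subst hn
  obtain ⟨h4, h3⟩ := (Tomescu.chromaticNumber_eq_four G).1 hchrom
  have hcol : ∀ k, G.Colorable k ↔ Tomescu.Col k G univ := fun k =>
    ⟨fun ⟨c⟩ => ⟨c, fun a _ b _ hab => c.valid hab⟩,
      fun ⟨f, hf⟩ => ⟨Coloring.mk f fun {a b} hab => hf a (mem_univ _) b (mem_univ _) hab⟩⟩
  have hc3 : ¬ Tomescu.Col 3 G univ := fun h => h3 ((hcol 3).2 h)
  have hc4 := (hcol 4).1 h4
  have hC := Tomescu.conn_of_connected hconn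
  have hn4 : 4 ≤ Fintype.card V := by
    have := Tomescu.four_le_card hc3
    rwa [card_univ] at this
  have hX : (4 : ℝ) ≤ x := by exact_mod_cast hx
  have hsum : ∑ f : V → Fin x, Tomescu.ind G univ f = chromPoly G x := by
    unfold chromPoly Tomescu.ind Tomescu.Proper
    rw [Nat.card_eq_fintype_card, Fintype.card_subtype]
    simp
  have hT : Tomescu.bound x (Fintype.card V) * (x : ℝ) ^ Fintype.card V =
      ((x * (x-1) * (x-2) * (x-3) * (x-1) ^ (Fintype.card V - 4) : ℕ) : ℝ) := by
    have h5 : x * (x-1) * (x-2) * (x-3) = x.descFactorial 4 := by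
      simp only [Nat.descFactorial_succ, Nat.descFactorial_zero]
      simp only [Nat.sub_zero, mul_one]; ring
    have h6 : (x : ℝ) ^ Fintype.card V = (x : ℝ) ^ 4 * (x : ℝ) ^ (Fintype.card V - 4) := by
      rw [← pow_add]; congr 1; omega
    have hx0 : (0 : ℝ) < x := by linarith
    rw [h5, Nat.cast_mul, Nat.cast_pow, Nat.cast_sub (by omega), Nat.cast_one,
      Tomescu.bound_eq hx hn4, h6, div_pow]
    field_simp
  have hmain := Tomescu.induction_bound x hx hyp _ (univ : Finset V) rfl G hC hc4 hc3
  rw [hsum, card_univ, hT, Nat.cast_le, Nat.cast_lt] at hmain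
  refine ⟨hmain.1, ?_⟩
  by_cases hK : Tomescu.HasK4 G univ
  · obtain ⟨P, hP, hP4, hPadj⟩ := hK
    have hclq : G.IsNClique 4 P := ⟨fun a ha b hb hab => hPadj a ha b hb hab, hP4⟩
    have hno5 : ∀ s : Finset V, ¬ G.IsNClique 5 s := by
      intro s hs
      have := hs.isClique.card_le_of_colorable h4
      rw [hs.card_eq] at this
      omega
    have hb := (hC.rooted (card_pos.1 (by omega)) hP).build
    have hPsum := Tomescu.clique_sum (x := x) hx hP4 hPadj
    have hdP : Tomescu.darts G P = 12 := by
      unfold Tomescu.darts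
      have : ∀ a ∈ P, (∑ b ∈ P, if G.Adj a b then 1 else 0) = 3 := by
        intro a ha
        rw [← card_filter]
        have : P.filter (G.Adj a) = P.erase a := by
          ext b
          rw [mem_filter, mem_erase]
          exact ⟨fun h => ⟨h.2.ne', h.1⟩, fun h => ⟨h.2, hPadj a ha b h.2 h.1.symm⟩⟩
        rw [this, card_erase_of_mem ha, hP4]
      rw [sum_congr rfl this, sum_const, hP4]; rfl
    have hpos : 0 < ∑ f : V → Fin x, Tomescu.ind G P f := by
      rw [hPsum]
      have : 0 < x.descFactorial 4 := Nat.descFactorial_pos.2 hx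
      positivity
    obtain ⟨hd1, hd2, hd3⟩ := Tomescu.build_darts hx hb hPadj hpos
    have hval : (((x : ℝ) - 1) / x) ^ (#(univ : Finset V) - #P) * ∑ f : V → Fin x, Tomescu.ind G P f =
        ((x * (x-1) * (x-2) * (x-3) * (x-1) ^ (Fintype.card V - 4) : ℕ) : ℝ) := by
      rw [← hT, Tomescu.bound_eq hx hn4, hPsum, hP4, card_univ]; ring
    rw [hval, hsum, Tomescu.darts_univ, hdP, hP4, card_univ] at hd2 hd3
    rw [Tomescu.darts_univ, hdP, hP4, card_univ] at hd1
    constructor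
    · intro he
      refine ⟨⟨P, hclq⟩, hno5, ?_⟩
      by_contra hne
      have := hd3 (by omega)
      rw [he] at this
      exact lt_irrefl _ this
    · rintro ⟨-, -, he⟩
      exact_mod_cast hd2 (by omega)
  · constructor
    · intro he
      exact absurd he (hmain.2 hK).ne
    · rintro ⟨⟨s, hs⟩, -⟩
      exact absurd ⟨s, subset_univ _, hs.card_eq, fun a ha b hb hab => hs.isClique ha hb hab⟩ hK
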